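/- arXiv:1306.3841 — 3 statements merged into one kernel-verified Lean document; each statement's English description precedes it below -/
import Mathlib

section
/- Let E = E(2,M,p) be a planar fractal percolation with integer M ≥ 2 and 0 < p ≤ 1. Then for ℙ(·|E ≠ ∅)-almost every realization, for ALL straight lines ℓ (including those parallel to the coordinate axes), the orthogonal projection proj_ℓ(E) of E onto ℓ satisfies dim_H(proj_ℓ(E)) = min{1, dim_H(E)}, where dim_H denotes Hausdorff dimension. -/
open MeasureTheory Set ENNReal ProbabilityTheory Real

noncomputable section

/-- The alphabet indexing the `M^d` subcubes of a cube in `[0,1]^d`. -/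
abbrev Alpha (d M : ℕ) : Type := Fin d → Fin M

/-- Finite nonempty words over the alphabet; they index `M`-adic cubes. -/
abbrev Word (d M : ℕ) : Type := {w : List (Alpha d M) // w ≠ []}

/-- The sample space: `{0,1}`-labelings of all finite nonempty words. -/
abbrev PercSpace (d M : ℕ) : Type := Word d M → Bool

/-- `P` is the product measure making the labels i.i.d. Bernoulli(`p`). -/
def IsBernoulliPerc (d M : ℕ) (p : ℝ) (P : Measure (PercSpace d M)) : Prop :=
  IsProbabilityMeasure P ∧
    ∀ (S : Finset (Word d M)) (b : Word d M → Bool),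
      P {ω | ∀ w ∈ S, ω w = b w} =
        ∏ w ∈ S, if b w then ENNReal.ofReal p else ENNReal.ofReal (1 - p)

/-- A level-`w.length` cube is retained iff its word and every nonempty prefix
of its word carry label 1. -/
def Retained (d M : ℕ) (ω : PercSpace d M) (w : List (Alpha d M)) : Prop :=
  ∀ (u : List (Alpha d M)) (hu : u ≠ []), u <+: w → ω ⟨u, hu⟩ = true

/-- The `i`-th coordinate of the lower-left corner of the cube indexed by `w`. -/
def wordBase (d M : ℕ) (w : List (Alpha d M)) (i : Fin d) : ℝ :=
  ∑ j : Fin w.length, ((w.get j) i : ℝ) * (M : ℝ) ^ (-(j : ℤ) - 1)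

/-- The closed `M`-adic cube of level `w.length` indexed by the word `w`. -/
def wordCube (d M : ℕ) (w : List (Alpha d M)) : Set (EuclideanSpace ℝ (Fin d)) :=
  {x | ∀ i, wordBase d M w i ≤ x i ∧ x i ≤ wordBase d M w i + (M : ℝ) ^ (-(w.length : ℤ))}

/-- `E_n`, the union of the retained level-`n` cubes. -/
def approx (d M : ℕ) (ω : PercSpace d M) (n : ℕ) : Set (EuclideanSpace ℝ (Fin d)) :=
  ⋃ w ∈ {w : List (Alpha d M) | w.length = n ∧ Retained d M ω w}, wordCube d M w

/-- The fractal percolation set `E = ⋂_{n ≥ 1} E_n`. -/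
def percLimit (d M : ℕ) (ω : PercSpace d M) : Set (EuclideanSpace ℝ (Fin d)) :=
  ⋂ n ∈ {n : ℕ | 1 ≤ n}, approx d M ω n

/-- Orthogonal projection of the plane onto the line through `z` with direction `v`. -/
def lineProj (z v : EuclideanSpace ℝ (Fin 2)) (x : EuclideanSpace ℝ (Fin 2)) :
    EuclideanSpace ℝ (Fin 2) :=
  z + ((@inner ℝ _ _ (x - z) v) / (@inner ℝ _ _ v v)) • v

/-!
Write `b = M² p`. Covering `E` by the retained cubes of level `n` gives `dim E ≤ log b / log M`.

Conversely let `t < 1` with `M ^ t < b`. With probability bounded below uniformly in `n`, there are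
at least `b ^ n / 2` retained cubes of level `n`, while for every level `m ≥ m₀` neither a single
cube nor a strip of width `M⁻ᵐ`, in any of polynomially many directions, carries essentially more
than its expected share of them; the failure probabilities are controlled by high moments of the
retained counts and a union bound. On this event, counting cubes shows that `∑ M ^ (-t m_k)` is
bounded below for every finite cover, by intervals of length `M ^ (-m_k)`, of the projection of the
level-`n` approximation in any direction. Hence with positive probability all projections of `E`
have dimension at least `t` simultaneously. The complementary event and extinction are
comparable with their images under the offspring generating function, whose strict convexity
upgrades this to almost sure on survival.
-/

/-! ### The Bernoulli labels -/

namespace IsBernoulliPerc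

variable {d M : ℕ} {p : ℝ} {P : Measure (PercSpace d M)}

lemma measure_label_eq (hP : IsBernoulliPerc d M p P) (w : Word d M) (b : Bool) :
    P {ω | ω w = b} = if b then ENNReal.ofReal p else ENNReal.ofReal (1 - p) := by
  simpa using hP.2 {w} fun _ => b

lemma prob_le_one [NeZero M] (hP : IsBernoulliPerc d M p P) : p ≤ 1 := by
  have := hP.1
  simpa using (hP.measure_label_eq ⟨[0], List.cons_ne_nil _ _⟩ true).symm.trans_le
    MeasureTheory.prob_le_one

lemma exists_eq_infinitePi [NeZero M] (hP : IsBernoulliPerc d M p P) :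
    ∃ μ : Measure Bool, ∃ _ : IsProbabilityMeasure μ, μ {true} = ENNReal.ofReal p ∧
      μ {false} = ENNReal.ofReal (1 - p) ∧ P = Measure.infinitePi fun _ : Word d M => μ := by
  have := hP.1
  let w₀ : Word d M := ⟨[0], List.cons_ne_nil _ _⟩
  let μ := P.map fun ω => ω w₀
  have hμ (b : Bool) : μ {b} = if b then ENNReal.ofReal p else ENNReal.ofReal (1 - p) := by
    rw [Measure.map_apply (measurable_pi_apply _) (measurableSet_singleton _)]
    exact hP.measure_label_eq w₀ b
  have : IsProbabilityMeasure μ :=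
    Measure.isProbabilityMeasure_map (measurable_pi_apply _).aemeasurable
  refine ⟨μ, this, hμ true, hμ false, ?_⟩
  refine ((Measure.isProjectiveLimit_infinitePi fun _ : Word d M => μ).unique fun S => ?_).symm
  refine Measure.ext_of_singleton fun b => ?_
  classical
  let b' : Word d M → Bool := fun w => if h : w ∈ S then b ⟨w, h⟩ else true
  have hpre : (S.restrict ⁻¹' {b} : Set (PercSpace d M)) = {ω | ∀ w ∈ S, ω w = b' w} := by
    ext ω
    simp +contextual [funext_iff, b']
  rw [Measure.pi_singleton, Measure.map_apply (Finset.measurable_restrict _)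
    (measurableSet_singleton _), hpre, hP.2 S b', ← Finset.prod_coe_sort]
  exact Finset.prod_congr rfl fun w _ => by simp [hμ, b']

end IsBernoulliPerc

/-! ### Branching -/

lemma indepFun_eval_comp_infinitePi {ι κ X : Type*} [MeasurableSpace X] {μ : ι → Measure X}
    [∀ i, IsProbabilityMeasure (μ i)] {i : ι} {f : κ → ι} (hi : i ∉ range f) :
    IndepFun (fun y : ι → X => y i) (fun y k => y (f k)) (Measure.infinitePi μ) := by
  have hindep := (iIndepFun_infinitePi (P := μ) (X := fun _ x => x) fun _ => measurable_id).iIndep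
  have h := indep_iSup_of_disjoint (fun j => (measurable_pi_apply j).comap_le) hindep
    (disjoint_singleton_left.2 hi)
  rw [iSup_singleton] at h
  refine indep_of_indep_of_le_right h ?_
  rw [MeasurableSpace.pi, MeasurableSpace.comap_iSup]
  exact iSup_le fun k => (MeasurableSpace.comap_comp.trans_le le_rfl).trans <|
    le_iSup₂_of_le (f k) (mem_range_self k) le_rfl

section Branching

variable {d M : ℕ}

/-- The labels of the descendants of the level-one cube `c`, read as a labeling of the whole
tree. -/
def subtreeLabels (c : Alpha d M) (ω : PercSpace d M) : PercSpace d M :=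
  fun w => ω ⟨c :: w.1, List.cons_ne_nil _ _⟩

/-- A nonempty word is a pair consisting of its first letter and the remaining word. -/
def wordEquivProd (d M : ℕ) : Alpha d M × List (Alpha d M) ≃ Word d M where
  toFun x := ⟨x.1 :: x.2, List.cons_ne_nil _ _⟩
  invFun w := (w.1.head w.2, w.1.tail)
  left_inv _ := rfl
  right_inv w := Subtype.ext (List.cons_head_tail w.2)

variable {p : ℝ} {P : Measure (PercSpace d M)} {μ : Measure Bool} [IsProbabilityMeasure μ]

lemma infinitePi_map_curry_word :
    (Measure.infinitePi fun _ : Word d M => μ).map (fun ω c t => ω (wordEquivProd d M (c, t))) =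
      Measure.pi fun _ : Alpha d M => Measure.infinitePi fun _ : List (Alpha d M) => μ := by
  rw [← Measure.infinitePi_eq_pi, ← Measure.infinitePi_map_curry fun _ _ => μ,
    ← Measure.infinitePi_map_piCongrLeft (X := fun _ => Bool) (μ := fun _ => μ) (wordEquivProd d M),
    Measure.map_map (by fun_prop) (by fun_prop)]
  rfl

lemma infinitePi_root_false_or_mem (H : Set (PercSpace d M)) (hH : MeasurableSet H) :
    Measure.infinitePi (fun _ : List (Alpha d M) => μ)
      {y | y [] = false ∨ (fun w : Word d M => y w.1) ∈ H} =
      μ {false} + μ {true} * Measure.infinitePi (fun _ : Word d M => μ) H := by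
  set Q := Measure.infinitePi fun _ : List (Alpha d M) => μ
  let rest : (List (Alpha d M) → Bool) → PercSpace d M := fun y w => y w.1
  have hrest : Measurable rest := by fun_prop
  have hroot (b : Bool) : Q ((fun y => y []) ⁻¹' {b}) = μ {b} :=
    (measurePreserving_eval_infinitePi (fun _ => μ) []).measure_preimage
      (measurableSet_singleton b).nullMeasurableSet
  have hQrest : Q (rest ⁻¹' H) = Measure.infinitePi (fun _ : Word d M => μ) H := by
    rw [← Measure.map_apply hrest hH, Measure.map_infinitePi_infinitePi_of_inj
      (P := fun _ : List (Alpha d M) => μ) Subtype.val_injective]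
  have hindep : IndepFun (fun y => y []) rest Q :=
    indepFun_eval_comp_infinitePi fun ⟨w, hw⟩ => w.2 hw
  have hsplit : {y : List (Alpha d M) → Bool | y [] = false ∨ rest y ∈ H} =
      (fun y => y []) ⁻¹' {false} ∪ (fun y => y []) ⁻¹' {true} ∩ rest ⁻¹' H := by
    ext y
    by_cases h : y [] = true <;> simp [h]
  have hdisj : Disjoint ((fun y : List (Alpha d M) → Bool => y []) ⁻¹' {false})
      ((fun y => y []) ⁻¹' {true} ∩ rest ⁻¹' H) :=
    disjoint_left.2 fun y (hy : y [] = false) hy' => by simp [hy] at hy'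
  rw [hsplit, measure_union hdisj
    ((measurable_pi_apply _ (measurableSet_singleton _)).inter (hrest hH)), hroot,
    hindep.measure_inter_preimage_eq_mul _ _ (measurableSet_singleton _) hH, hQrest, hroot]

lemma IsBernoulliPerc.measure_forall_letter [NeZero M] (hP : IsBernoulliPerc d M p P)
    {H : Set (PercSpace d M)} (hH : MeasurableSet H) :
    P {ω | ∀ c, ω ⟨[c], List.cons_ne_nil _ _⟩ = false ∨ subtreeLabels c ω ∈ H} =
      (ENNReal.ofReal (1 - p) + ENNReal.ofReal p * P H) ^ M ^ d := by
  obtain ⟨μ, _, htrue, hfalse, rfl⟩ := hP.exists_eq_infinitePi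
  let K : Set (List (Alpha d M) → Bool) := {y | y [] = false ∨ (fun w : Word d M => y w.1) ∈ H}
  have hK : MeasurableSet K :=
    (measurableSet_eq_fun (by fun_prop) (by fun_prop)).union
      ((by fun_prop : Measurable fun (y : List (Alpha d M) → Bool) (w : Word d M) => y w.1) hH)
  calc (Measure.infinitePi fun _ : Word d M => μ)
        {ω | ∀ c, ω ⟨[c], List.cons_ne_nil _ _⟩ = false ∨ subtreeLabels c ω ∈ H}
      = (Measure.infinitePi fun _ : Word d M => μ)
          ((fun ω c t => ω (wordEquivProd d M (c, t))) ⁻¹' univ.pi fun _ => K) := by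
        congr 1
        ext ω
        simp only [mem_preimage, mem_univ_pi]
        rfl
    _ = ∏ _ : Alpha d M, Measure.infinitePi (fun _ : List (Alpha d M) => μ) K := by
        rw [← Measure.map_apply (by fun_prop) (.univ_pi fun _ => hK), infinitePi_map_curry_word,
          Measure.pi_pi]
    _ = _ := by
        simp [K, infinitePi_root_false_or_mem H hH, htrue, hfalse]

end Branching

/-! ### Words and retained cubes -/

section Words

variable {d M : ℕ} {ω : PercSpace d M}

/-- The words of length `n`, indexing the `M`-adic cubes of level `n`. -/
def wordsOfLength (d M n : ℕ) : Finset (List (Alpha d M)) :=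
  (Finset.univ : Finset (Fin n → Alpha d M)).image List.ofFn

@[simp]
lemma mem_wordsOfLength {n : ℕ} {w : List (Alpha d M)} :
    w ∈ wordsOfLength d M n ↔ w.length = n := by
  simp only [wordsOfLength, Finset.mem_image, Finset.mem_univ, true_and]
  exact ⟨by rintro ⟨f, rfl⟩; simp, by rintro rfl; exact ⟨w.get, List.ofFn_get w⟩⟩

lemma card_wordsOfLength (n : ℕ) : (wordsOfLength d M n).card = (M ^ d) ^ n := by
  rw [wordsOfLength, Finset.card_image_of_injective _ List.ofFn_injective]
  simp

/-- The nonempty prefixes of a word, indexing the cubes that contain its cube. -/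
def prefixes (w : List (Alpha d M)) : Finset (Word d M) :=
  w.inits.toFinset.subtype (· ≠ [])

@[simp]
lemma mem_prefixes {w : List (Alpha d M)} {u : Word d M} : u ∈ prefixes w ↔ u.1 <+: w := by
  simp [prefixes]

lemma mem_prefixes_iff_eq_take {w : List (Alpha d M)} {u : Word d M} :
    u ∈ prefixes w ↔ u.1 = w.take u.1.length :=
  mem_prefixes.trans List.prefix_iff_eq_take

lemma exists_mem_prefixes_length_eq {w : List (Alpha d M)} {j : ℕ}
    (hj : j ∈ Finset.Ioc 0 w.length) :
    ∃ u ∈ prefixes w, u.1 = w.take j ∧ u.1.length = j := by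
  have hj := Finset.mem_Ioc.1 hj
  have hlen : (w.take j).length = j := by simp [hj.2]
  exact ⟨⟨w.take j, List.ne_nil_of_length_pos (by omega)⟩, mem_prefixes.2 (List.take_prefix _ _),
    rfl, hlen⟩

lemma card_prefixes (w : List (Alpha d M)) : (prefixes w).card = w.length := by
  have himage : (prefixes w).image (fun u => u.1.length) = Finset.Ioc 0 w.length := by
    ext j
    refine ⟨fun hj => ?_, fun hj => ?_⟩
    · obtain ⟨u, hu, rfl⟩ := Finset.mem_image.1 hj
      exact Finset.mem_Ioc.2 ⟨List.length_pos_iff.2 u.2, (mem_prefixes.1 hu).length_le⟩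
    · obtain ⟨u, hu, -, hlen⟩ := exists_mem_prefixes_length_eq hj
      exact Finset.mem_image.2 ⟨u, hu, hlen⟩
  have hinj : Set.InjOn (fun u : Word d M => u.1.length) (prefixes w) := fun u hu u' hu' h => by
    rw [Subtype.ext_iff, mem_prefixes_iff_eq_take.1 hu, mem_prefixes_iff_eq_take.1 hu']
    exact congrArg w.take h
  rw [← Finset.card_image_of_injOn hinj, himage, Nat.card_Ioc, Nat.sub_zero]

lemma retained_iff_forall_mem_prefixes {w : List (Alpha d M)} :
    Retained d M ω w ↔ ∀ u ∈ prefixes w, ω u = true := by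
  simp [Retained, Word, Alpha]

lemma Retained.of_prefix {w u : List (Alpha d M)} (h : Retained d M ω w) (hu : u <+: w) :
    Retained d M ω u :=
  fun u' hu' hp => h u' hu' (hp.trans hu)

lemma retained_cons {c : Alpha d M} {w : List (Alpha d M)} :
    Retained d M ω (c :: w) ↔
      ω ⟨[c], List.cons_ne_nil _ _⟩ = true ∧ Retained d M (subtreeLabels c ω) w := by
  refine ⟨fun h => ⟨h [c] _ (by simp), fun u _ hp => h (c :: u) _ ((List.prefix_cons_inj c).2 hp)⟩,
    ?_⟩
  rintro ⟨hc, hw⟩ (_ | ⟨c', _ | ⟨e, u⟩⟩) hu hp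
  · exact absurd rfl hu
  · obtain ⟨rfl, -⟩ := List.cons_prefix_cons.1 hp
    exact hc
  · obtain ⟨rfl, hpref⟩ := List.cons_prefix_cons.1 hp
    exact hw (e :: u) (List.cons_ne_nil _ _) hpref

lemma measurableSet_setOf_retained (w : List (Alpha d M)) :
    MeasurableSet {ω : PercSpace d M | Retained d M ω w} := by
  simp only [retained_iff_forall_mem_prefixes, ofPred_forall]
  exact Finset.measurableSet_biInter _ fun u _ => measurableSet_eq_fun (by fun_prop) (by fun_prop)

open scoped Classical in
/-- The number of retained words in a finite set `T` of words. -/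
def retainedCount (T : Finset (List (Alpha d M))) (ω : PercSpace d M) : ℕ :=
  (T.filter fun w => Retained d M ω w).card

lemma retainedCount_eq_sum_indicator (T : Finset (List (Alpha d M))) (ω : PercSpace d M) :
    (retainedCount T ω : ℝ≥0∞) = ∑ w ∈ T, {ω | Retained d M ω w}.indicator 1 ω := by
  classical
  simp only [retainedCount, Finset.card_filter, Nat.cast_sum, Nat.cast_ite, Nat.cast_one,
    Nat.cast_zero, Set.indicator_apply, mem_ofPred_eq, Pi.one_apply]

lemma measurable_retainedCount (T : Finset (List (Alpha d M))) : Measurable (retainedCount T) := by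
  classical
  unfold retainedCount
  simp only [Finset.card_filter]
  exact Finset.measurable_sum _ fun w _ =>
    Measurable.ite (measurableSet_setOf_retained w) measurable_const measurable_const

lemma measurable_natCast_retainedCount {R : Type*} [NatCast R] [MeasurableSpace R]
    (T : Finset (List (Alpha d M))) : Measurable fun ω => (retainedCount T ω : R) :=
  measurable_from_top.comp (measurable_retainedCount T)

end Words

/-! ### Zero-one law -/

lemma eq_of_strictConvexOn_of_le_of_ge {f : ℝ → ℝ} (hf : StrictConvexOn ℝ (Icc 0 1) f)
    (hf1 : f 1 ≤ 1) {e q : ℝ} (he0 : 0 ≤ e) (heq : e ≤ q) (hq1 : q < 1) (hfe : f e ≤ e)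
    (hfq : q ≤ f q) : q = e := by
  by_contra hne
  have hlt : e < q := lt_of_le_of_ne heq (Ne.symm hne)
  have hpos : 0 < 1 - e := by linarith
  set l := (1 - q) / (1 - e) with hl
  have hl0 : 0 < l := div_pos (by linarith) hpos
  have hl1 : 0 < 1 - l := sub_pos.2 <| (div_lt_one hpos).2 (by linarith)
  have hcomb : l * e + (1 - l) * 1 = q := by
    rw [hl]
    field_simp
    ring
  have hconv := hf.2 ⟨he0, by linarith⟩ (right_mem_Icc.2 zero_le_one) (by linarith) hl0 hl1
    (add_sub_cancel l 1)
  simp only [smul_eq_mul] at hconv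
  rw [hcomb] at hconv
  nlinarith

section ZeroOne

variable {d M : ℕ} {p : ℝ}

/-- The generating function of the number of retained cubes among `N` cubes, each retained
independently with probability `p`. -/
def offspringGenFun (p : ℝ) (N : ℕ) (x : ℝ) : ℝ := (1 - p + p * x) ^ N

lemma strictConvexOn_offspringGenFun {N : ℕ} (hN : 2 ≤ N) (hp0 : 0 < p) (hp1 : p ≤ 1) :
    StrictConvexOn ℝ (Icc 0 1) (offspringGenFun p N) := by
  refine ⟨convex_Icc 0 1, fun x hx y hy hxy a b ha hb hab => ?_⟩
  have hmem : ∀ z ∈ Icc (0 : ℝ) 1, 1 - p + p * z ∈ Ici (0 : ℝ) := fun z hz =>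
    add_nonneg (sub_nonneg.2 hp1) (mul_nonneg hp0.le hz.1)
  have hne : 1 - p + p * x ≠ 1 - p + p * y := by simpa [hp0.ne'] using hxy
  have haffine : 1 - p + p * (a • x + b • y) = a • (1 - p + p * x) + b • (1 - p + p * y) := by
    simp only [smul_eq_mul]
    linear_combination (p - 1) * hab
  rw [offspringGenFun, haffine]
  exact (strictConvexOn_pow hN).2 (hmem x hx) (hmem y hy) hne ha hb hab

/-- The event that no cube of some level is retained. -/
def extinction (d M : ℕ) : Set (PercSpace d M) :=
  {ω | ∃ n, ∀ w ∈ wordsOfLength d M n, ¬ Retained d M ω w}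

lemma measurableSet_extinction : MeasurableSet (extinction d M) := by
  simp only [extinction, ofPred_exists, ofPred_forall]
  exact MeasurableSet.iUnion fun n => Finset.measurableSet_biInter _ fun w _ =>
    (measurableSet_setOf_retained w).compl

lemma mem_extinction_of_forall_letter {ω : PercSpace d M}
    (h : ∀ c, ω ⟨[c], List.cons_ne_nil _ _⟩ = false ∨ subtreeLabels c ω ∈ extinction d M) :
    ω ∈ extinction d M := by
  have hlevel (c : Alpha d M) : ∃ n, ω ⟨[c], List.cons_ne_nil _ _⟩ = false ∨
      ∀ w ∈ wordsOfLength d M n, ¬ Retained d M (subtreeLabels c ω) w :=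
    (h c).elim (fun hc => ⟨0, .inl hc⟩) fun ⟨n, hn⟩ => ⟨n, .inr hn⟩
  choose n hn using hlevel
  refine ⟨Finset.univ.sup n + 1, ?_⟩
  rintro (_ | ⟨c, w⟩) hw hret
  · simp at hw
  obtain ⟨hc, hret⟩ := retained_cons.1 hret
  have hlen : w.length = Finset.univ.sup n := by simpa using hw
  have hnc : n c ≤ w.length := hlen ▸ Finset.le_sup (Finset.mem_univ c)
  rcases hn c with hc' | hdead
  · exact Bool.false_ne_true (hc'.symm.trans hc)
  · exact hdead (w.take (n c)) (by simpa using hnc) (hret.of_prefix (List.take_prefix _ _))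

namespace IsBernoulliPerc

variable {P : Measure (PercSpace d M)}

lemma measureReal_forall_letter [NeZero M] (hP : IsBernoulliPerc d M p P) (hp0 : 0 < p)
    {H : Set (PercSpace d M)} (hH : MeasurableSet H) :
    P.real {ω | ∀ c, ω ⟨[c], List.cons_ne_nil _ _⟩ = false ∨ subtreeLabels c ω ∈ H} =
      offspringGenFun p (M ^ d) (P.real H) := by
  have := hP.1
  rw [measureReal_def, hP.measure_forall_letter hH, offspringGenFun, ENNReal.toReal_pow,
    ENNReal.toReal_add ofReal_ne_top (mul_ne_top ofReal_ne_top (measure_ne_top P H)),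
    ENNReal.toReal_mul, ENNReal.toReal_ofReal hp0.le,
    ENNReal.toReal_ofReal (sub_nonneg.2 hP.prob_le_one), measureReal_def]

/-- Both the extinction probability `e` and the outer probability `q` of `Aᶜ` are compared with
their images under the offspring generating function `f`: one has `f e ≤ e ≤ q ≤ f q`, and
strict convexity leaves no room between `e` and `1`. -/
theorem ae_mem_of_notMem_extinction (hP : IsBernoulliPerc d M p P) (hp0 : 0 < p) (hMd : 1 < M ^ d)
    {A G : Set (PercSpace d M)}
    (hA : ∀ ω c, ω ⟨[c], List.cons_ne_nil _ _⟩ = true → subtreeLabels c ω ∈ A → ω ∈ A)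
    (hAext : Disjoint A (extinction d M)) (hG : MeasurableSet G) (hGA : G ⊆ A) (hG0 : P G ≠ 0) :
    ∀ᵐ ω ∂P, ω ∉ extinction d M → ω ∈ A := by
  have := hP.1
  have : NeZero M := ⟨by rintro rfl; rcases d with _ | d <;> simp at hMd⟩
  have hsub : extinction d M ⊆ Aᶜ := subset_compl_iff_disjoint_left.2 hAext
  have hlt : P.real Aᶜ < 1 := calc
    P.real Aᶜ ≤ P.real Gᶜ := measureReal_mono (compl_subset_compl.2 hGA)
    _ = 1 - P.real G := probReal_compl_eq_one_sub hG
    _ < 1 := sub_lt_self _ <| measureReal_nonneg.lt_of_ne' <|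
      (measureReal_ne_zero_iff (measure_ne_top P G)).2 hG0
  have hext : offspringGenFun p (M ^ d) (P.real (extinction d M)) ≤ P.real (extinction d M) := by
    rw [← hP.measureReal_forall_letter hp0 measurableSet_extinction]
    exact measureReal_mono fun ω hω => mem_extinction_of_forall_letter hω
  have hcompl : P.real Aᶜ ≤ offspringGenFun p (M ^ d) (P.real Aᶜ) := by
    have htoMeas : P.real Aᶜ = P.real (toMeasurable P Aᶜ) := by
      simp only [measureReal_def, measure_toMeasurable]
    rw [htoMeas, ← hP.measureReal_forall_letter hp0 (measurableSet_toMeasurable P Aᶜ), ← htoMeas]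
    refine measureReal_mono fun ω hω c => ?_
    rcases Bool.eq_false_or_eq_true (ω ⟨[c], List.cons_ne_nil _ _⟩) with hc | hc
    · exact .inr <| subset_toMeasurable P Aᶜ fun hcA => hω (hA ω c hc hcA)
    · exact .inl hc
  have heq : P.real Aᶜ = P.real (extinction d M) :=
    eq_of_strictConvexOn_of_le_of_ge (strictConvexOn_offspringGenFun hMd hp0 hP.prob_le_one)
      (by simp [offspringGenFun]) measureReal_nonneg (measureReal_mono hsub) hlt hext hcompl
  have hnull : P (Aᶜ \ extinction d M) = 0 := by
    rw [measure_sdiff hsub measurableSet_extinction.nullMeasurableSet (measure_ne_top _ _),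
      (measureReal_eq_measureReal_iff).1 heq, tsub_self]
  filter_upwards [measure_eq_zero_iff_ae_notMem.1 hnull] with ω hω hext
  exact by_contra fun hωA => hω ⟨hωA, hext⟩

end IsBernoulliPerc

end ZeroOne

/-! ### Moments of the number of retained words -/

section Moments

variable {d M : ℕ}

/-- The labels that decide whether all words of `L` are retained. -/
def prefixSet (L : Finset (List (Alpha d M))) : Finset (Word d M) := L.biUnion prefixes

lemma prefixSet_empty : prefixSet (∅ : Finset (List (Alpha d M))) = ∅ := Finset.biUnion_empty

lemma prefixSet_insert (v : List (Alpha d M)) (L : Finset (List (Alpha d M))) :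
    prefixSet (insert v L) = prefixes v ∪ prefixSet L := Finset.biUnion_insert

lemma setOf_forall_retained_eq (L : Finset (List (Alpha d M))) :
    {ω | ∀ v ∈ L, Retained d M ω v} = {ω | ∀ u ∈ prefixSet L, ω u = true} := by
  ext ω
  simp only [prefixSet, Finset.mem_biUnion, mem_ofPred_eq, retained_iff_forall_mem_prefixes]
  exact ⟨fun h u ⟨v, hv, hu⟩ => h v hv u hu, fun h v hv u hu => h u ⟨v, hv, hu⟩⟩

lemma measurableSet_forall_retained (L : Finset (List (Alpha d M))) :
    MeasurableSet {ω : PercSpace d M | ∀ v ∈ L, Retained d M ω v} := by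
  simp only [ofPred_forall]
  exact Finset.measurableSet_biInter _ fun v _ => measurableSet_setOf_retained v

/-- The longest prefix of `v` shared with a word of `L` has some length `j`, and the `n - j` longer
prefixes of `v` are not prefixes of words of `L`. -/
lemma exists_card_prefixSet_add_le {L : Finset (List (Alpha d M))} {v : List (Alpha d M)} {m n : ℕ}
    (hL : L.Nonempty) (hv : v.length = n) (hmn : m ≤ n) (hm : ∀ v' ∈ L, v.take m = v'.take m) :
    ∃ v' ∈ L, ∃ j ∈ Finset.Icc m n, v.take j = v'.take j ∧
      (prefixSet L).card + (n - j) ≤ (prefixSet (insert v L)).card := by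
  classical
  let Shared : ℕ → Prop := fun j => ∃ v' ∈ L, v.take j = v'.take j
  obtain ⟨v₀, hv₀⟩ := hL
  have hsharedm : Shared m := ⟨v₀, hv₀, hm v₀ hv₀⟩
  set J := Nat.findGreatest Shared n
  have hJ : J ∈ Finset.Icc m n :=
    Finset.mem_Icc.2 ⟨Nat.le_findGreatest hmn hsharedm, Nat.findGreatest_le n⟩
  obtain ⟨v', hv', hvv'⟩ : Shared J := Nat.findGreatest_spec hmn hsharedm
  have hnew : Finset.Ioc J n ⊆ (prefixes v \ prefixSet L).image fun u => u.1.length := by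
    intro j hj
    have hj := Finset.mem_Ioc.1 hj
    obtain ⟨u, hu, htake, hlen⟩ :=
      exists_mem_prefixes_length_eq (w := v) (j := j) (Finset.mem_Ioc.2 (by omega))
    refine Finset.mem_image.2 ⟨u, Finset.mem_sdiff.2 ⟨hu, fun huL => ?_⟩, hlen⟩
    obtain ⟨w, hw, huw⟩ := Finset.mem_biUnion.1 huL
    have hshared : Shared j :=
      ⟨w, hw, by rw [← htake, ← hlen]; exact mem_prefixes_iff_eq_take.1 huw⟩
    exact absurd (Nat.le_findGreatest hj.2 hshared) (not_le.2 hj.1)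
  refine ⟨v', hv', J, hJ, hvv', ?_⟩
  have hcard := (Finset.card_le_card hnew).trans Finset.card_image_le
  rw [Nat.card_Ioc] at hcard
  rw [prefixSet_insert, ← Finset.card_sdiff_add_card]
  omega

/-- The words of `T` whose cubes lie in the same cube of level `j` as that of `v`. -/
def agreeing (T : Finset (List (Alpha d M))) (v : List (Alpha d M)) (j : ℕ) :
    Finset (List (Alpha d M)) :=
  T.filter fun w => w.take j = v.take j

/-- `T` consists of words of length `n` with a common prefix of length `m`, and given that one of
them is retained, the expected number of retained words in `T` is bounded by `R`. -/
structure HasOverlapBound (p : ℝ) (T : Finset (List (Alpha d M))) (m n : ℕ) (R : ℝ) : Prop where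
  length_eq : ∀ v ∈ T, v.length = n
  le : m ≤ n
  take_eq : ∀ v ∈ T, ∀ v' ∈ T, v.take m = v'.take m
  nonneg : 0 ≤ R
  sum_le : ∀ v ∈ T, ∑ j ∈ Finset.Icc m n, p ^ (n - j) * ((agreeing T v j).card : ℝ) ≤ R

namespace HasOverlapBound

variable {p R : ℝ} {T : Finset (List (Alpha d M))} {m n : ℕ}

lemma sum_ofReal_le (hT : HasOverlapBound p T m n R) (hp0 : 0 ≤ p) {v : List (Alpha d M)}
    (hv : v ∈ T) :
    ∑ j ∈ Finset.Icc m n, ENNReal.ofReal p ^ (n - j) * ((agreeing T v j).card : ℝ≥0∞) ≤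
      ENNReal.ofReal R := by
  refine le_trans (le_of_eq ?_) (ENNReal.ofReal_le_ofReal (hT.sum_le v hv))
  rw [ENNReal.ofReal_sum_of_nonneg fun j _ => by positivity]
  exact Finset.sum_congr rfl fun j _ => by
    rw [ENNReal.ofReal_mul (by positivity), ENNReal.ofReal_pow hp0, ENNReal.ofReal_natCast]

lemma card_mul_pow_le (hT : HasOverlapBound p T m n R) (hp0 : 0 ≤ p) (hp1 : p ≤ 1) :
    (T.card : ℝ≥0∞) * ENNReal.ofReal p ^ n ≤ ENNReal.ofReal R := by
  rcases T.eq_empty_or_nonempty with rfl | ⟨v, hv⟩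
  · simp
  have hagree : agreeing T v m = T := Finset.filter_true_of_mem fun w hw => hT.take_eq w hw v hv
  calc (T.card : ℝ≥0∞) * ENNReal.ofReal p ^ n
      ≤ ENNReal.ofReal p ^ (n - m) * ((agreeing T v m).card : ℝ≥0∞) := by
        rw [hagree, mul_comm]
        gcongr ?_ * _
        exact pow_le_pow_right_of_le_one' (ofReal_le_one.2 hp1) (Nat.sub_le _ _)
    _ ≤ _ := Finset.single_le_sum
        (f := fun j => ENNReal.ofReal p ^ (n - j) * ((agreeing T v j).card : ℝ≥0∞))
        (fun _ _ => zero_le) (Finset.left_mem_Icc.2 hT.le)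
    _ ≤ ENNReal.ofReal R := hT.sum_ofReal_le hp0 hv

lemma pow_card_prefixSet_insert_le (hT : HasOverlapBound p T m n R) (hp1 : p ≤ 1)
    {L : Finset (List (Alpha d M))} (hL : L.Nonempty) (hLT : L ⊆ T) {v : List (Alpha d M)}
    (hv : v ∈ T) :
    ENNReal.ofReal p ^ (prefixSet (insert v L)).card ≤ ENNReal.ofReal p ^ (prefixSet L).card *
      ∑ v' ∈ L, ∑ j ∈ Finset.Icc m n,
        if v.take j = v'.take j then ENNReal.ofReal p ^ (n - j) else 0 := by
  set q := ENNReal.ofReal p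
  obtain ⟨v', hv', j, hj, hvv', hcard⟩ := exists_card_prefixSet_add_le hL (hT.length_eq v hv) hT.le
    fun v' hv' => hT.take_eq v hv v' (hLT hv')
  calc q ^ (prefixSet (insert v L)).card
      ≤ q ^ ((prefixSet L).card + (n - j)) :=
        pow_le_pow_right_of_le_one' (ofReal_le_one.2 hp1) hcard
    _ = q ^ (prefixSet L).card * if v.take j = v'.take j then q ^ (n - j) else 0 := by
        rw [pow_add, if_pos hvv']
    _ ≤ q ^ (prefixSet L).card *
          ∑ j ∈ Finset.Icc m n, if v.take j = v'.take j then q ^ (n - j) else 0 := by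
        gcongr
        exact Finset.single_le_sum (f := fun j => if v.take j = v'.take j then q ^ (n - j) else 0)
          (fun _ _ => zero_le) hj
    _ ≤ _ := by
        gcongr
        exact Finset.single_le_sum (f := fun v' => ∑ j ∈ Finset.Icc m n,
          if v.take j = v'.take j then q ^ (n - j) else 0) (fun _ _ => zero_le) hv'

lemma sum_pow_card_prefixSet_insert_le (hT : HasOverlapBound p T m n R) (hp0 : 0 ≤ p) (hp1 : p ≤ 1)
    {L : Finset (List (Alpha d M))} (hLT : L ⊆ T) :
    ∑ v ∈ T, ENNReal.ofReal p ^ (prefixSet (insert v L)).card ≤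
      ENNReal.ofReal p ^ (prefixSet L).card * ((L.card + 1) * ENNReal.ofReal R) := by
  set q := ENNReal.ofReal p
  rcases L.eq_empty_or_nonempty with rfl | hL
  · have hpow (v) (hv : v ∈ T) : q ^ (prefixSet (insert v ∅)).card = q ^ n := by
      rw [prefixSet_insert, prefixSet_empty, Finset.union_empty, card_prefixes, hT.length_eq v hv]
    rw [Finset.sum_congr rfl hpow, Finset.sum_const, nsmul_eq_mul, prefixSet_empty]
    simpa using hT.card_mul_pow_le hp0 hp1
  refine (Finset.sum_le_sum fun v hv => hT.pow_card_prefixSet_insert_le hp1 hL hLT hv).trans ?_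
  rw [← Finset.mul_sum, Finset.sum_comm]
  gcongr
  have hsum (v') (hv' : v' ∈ L) : ∑ v ∈ T, ∑ j ∈ Finset.Icc m n,
      (if v.take j = v'.take j then q ^ (n - j) else 0) ≤ ENNReal.ofReal R := by
    rw [Finset.sum_comm]
    refine le_of_eq_of_le (Finset.sum_congr rfl fun j _ => ?_) (hT.sum_ofReal_le hp0 (hLT hv'))
    rw [← Finset.sum_filter, Finset.sum_const, nsmul_eq_mul, mul_comm, agreeing]
  refine (Finset.sum_le_sum hsum).trans ?_
  rw [Finset.sum_const, nsmul_eq_mul]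
  gcongr
  exact le_self_add

end HasOverlapBound

namespace IsBernoulliPerc

variable {p R : ℝ} {P : Measure (PercSpace d M)} {T : Finset (List (Alpha d M))} {m n : ℕ}

lemma measure_forall_retained (hP : IsBernoulliPerc d M p P) (L : Finset (List (Alpha d M))) :
    P {ω | ∀ v ∈ L, Retained d M ω v} = ENNReal.ofReal p ^ (prefixSet L).card := by
  rw [setOf_forall_retained_eq]
  simpa using hP.2 (prefixSet L) fun _ => true

lemma measure_retained (hP : IsBernoulliPerc d M p P) (v : List (Alpha d M)) :
    P {ω | Retained d M ω v} = ENNReal.ofReal p ^ v.length := by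
  simpa [prefixSet, card_prefixes] using hP.measure_forall_retained {v}

lemma lintegral_retainedCount (hP : IsBernoulliPerc d M p P) (hT : ∀ v ∈ T, v.length = n) :
    ∫⁻ ω, (retainedCount T ω : ℝ≥0∞) ∂P = T.card * ENNReal.ofReal p ^ n := by
  simp only [retainedCount_eq_sum_indicator]
  rw [lintegral_finsetSum _ fun v _ =>
    measurable_one.indicator (measurableSet_setOf_retained v), ← nsmul_eq_mul, ← Finset.sum_const]
  exact Finset.sum_congr rfl fun v hv => by
    rw [lintegral_indicator_one (measurableSet_setOf_retained v), hP.measure_retained, hT v hv]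

lemma lintegral_indicator_mul_retainedCount_pow_le (hP : IsBernoulliPerc d M p P) (hp0 : 0 ≤ p)
    (hp1 : p ≤ 1) (hT : HasOverlapBound p T m n R) (k : ℕ) {L : Finset (List (Alpha d M))}
    (hLT : L ⊆ T) :
    ∫⁻ ω, {ω | ∀ v ∈ L, Retained d M ω v}.indicator 1 ω * (retainedCount T ω : ℝ≥0∞) ^ k ∂P ≤
      ENNReal.ofReal p ^ (prefixSet L).card * ((L.card + k) * ENNReal.ofReal R) ^ k := by
  induction k generalizing L with
  | zero =>
    simp [lintegral_indicator_one (measurableSet_forall_retained L), hP.measure_forall_retained]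
  | succ k ih =>
    let F (L : Finset (List (Alpha d M))) (ω : PercSpace d M) : ℝ≥0∞ :=
      {ω | ∀ v ∈ L, Retained d M ω v}.indicator 1 ω * (retainedCount T ω : ℝ≥0∞) ^ k
    have hmeas (L : Finset (List (Alpha d M))) : Measurable (F L) :=
      (measurable_one.indicator (measurableSet_forall_retained L)).mul
        ((measurable_natCast_retainedCount T).pow_const k)
    have hexpand (ω : PercSpace d M) : {ω | ∀ v ∈ L, Retained d M ω v}.indicator 1 ω *
        (retainedCount T ω : ℝ≥0∞) ^ (k + 1) = ∑ v ∈ T, F (insert v L) ω := by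
      rw [pow_succ', ← mul_assoc, ← Finset.sum_mul, retainedCount_eq_sum_indicator, Finset.mul_sum]
      congr 1
      refine Finset.sum_congr rfl fun v _ => ?_
      rw [← Pi.mul_apply, ← inter_indicator_one]
      congr 1
      ext ω
      simp [and_comm]
    calc ∫⁻ ω, {ω | ∀ v ∈ L, Retained d M ω v}.indicator 1 ω *
          (retainedCount T ω : ℝ≥0∞) ^ (k + 1) ∂P
        = ∑ v ∈ T, ∫⁻ ω, F (insert v L) ω ∂P := by
          simp_rw [hexpand]
          exact lintegral_finsetSum _ fun v _ => hmeas _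
      _ ≤ ∑ v ∈ T, ENNReal.ofReal p ^ (prefixSet (insert v L)).card *
            ((L.card + (k + 1 : ℕ)) * ENNReal.ofReal R) ^ k := by
          refine Finset.sum_le_sum fun v hv => (ih (Finset.insert_subset hv hLT)).trans ?_
          have hcard : (((insert v L).card : ℕ) : ℝ≥0∞) + k ≤ L.card + (k + 1 : ℕ) := by
            exact_mod_cast (by have := Finset.card_insert_le v L; omega)
          gcongr ENNReal.ofReal p ^ _ * (?_ * _) ^ k
      _ ≤ ENNReal.ofReal p ^ (prefixSet L).card * ((L.card + 1) * ENNReal.ofReal R) *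
            ((L.card + (k + 1 : ℕ)) * ENNReal.ofReal R) ^ k := by
          rw [← Finset.sum_mul]
          gcongr
          exact hT.sum_pow_card_prefixSet_insert_le hp0 hp1 hLT
      _ ≤ ENNReal.ofReal p ^ (prefixSet L).card *
            ((L.card + (k + 1 : ℕ)) * ENNReal.ofReal R) ^ (k + 1) := by
          rw [pow_succ', mul_assoc]
          gcongr
          exact_mod_cast Nat.le_add_left 1 k

lemma lintegral_retainedCount_pow_le (hP : IsBernoulliPerc d M p P) (hp0 : 0 ≤ p) (hp1 : p ≤ 1)
    (hT : HasOverlapBound p T m n R) (k : ℕ) :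
    ∫⁻ ω, (retainedCount T ω : ℝ≥0∞) ^ k ∂P ≤ ENNReal.ofReal ((k * R) ^ k) := by
  have hR := hT.nonneg
  rw [ENNReal.ofReal_pow (by positivity), ENNReal.ofReal_mul (by positivity),
    ENNReal.ofReal_natCast]
  simpa [prefixSet_empty] using
    hP.lintegral_indicator_mul_retainedCount_pow_le hp0 hp1 hT k (Finset.empty_subset T)

lemma measure_le_retainedCount_le (hP : IsBernoulliPerc d M p P) (hp0 : 0 ≤ p) (hp1 : p ≤ 1)
    (hT : HasOverlapBound p T m n R) {x : ℝ} (hx : 0 < x) (k : ℕ) :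
    P {ω | x ≤ retainedCount T ω} ≤ ENNReal.ofReal ((k * R / x) ^ k) := by
  have hmeas : Measurable fun ω => (retainedCount T ω : ℝ≥0∞) ^ k :=
    (measurable_natCast_retainedCount T).pow_const k
  have hsub : {ω | x ≤ retainedCount T ω} ⊆
      {ω | ENNReal.ofReal x ^ k ≤ (retainedCount T ω : ℝ≥0∞) ^ k} := by
    intro ω (hω : x ≤ retainedCount T ω)
    rw [mem_ofPred_eq, ← ENNReal.ofReal_natCast]
    exact pow_le_pow_left' (ENNReal.ofReal_le_ofReal hω) k
  rw [div_pow, ENNReal.ofReal_div_of_pos (by positivity), ENNReal.ofReal_pow hx.le]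
  exact (measure_mono hsub).trans <| (meas_ge_le_lintegral_div hmeas.aemeasurable (by simp [hx])
    (by simp)).trans <| ENNReal.div_le_div_right (hP.lintegral_retainedCount_pow_le hp0 hp1 hT k) _

end IsBernoulliPerc

end Moments

/-! ### Descendants and strips -/

section GridCoord

variable {d M : ℕ}

/-- The position of the cube indexed by a word in the grid of cubes of its level: the lower-left
corner of the cube is `gridCoord w / M ^ w.length`. -/
def gridCoord : List (Alpha d M) → Fin d → ℕ
  | [], _ => 0
  | c :: w, i => c i * M ^ w.length + gridCoord w i

lemma gridCoord_lt (w : List (Alpha d M)) (i : Fin d) : gridCoord w i < M ^ w.length := by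
  induction w with
  | nil => simp [gridCoord]
  | cons c w ih =>
    have hci := (c i).2
    simp only [gridCoord, List.length_cons, pow_succ]
    nlinarith

lemma gridCoord_append (u v : List (Alpha d M)) (i : Fin d) :
    gridCoord (u ++ v) i = gridCoord u i * M ^ v.length + gridCoord v i := by
  induction u with
  | nil => simp [gridCoord]
  | cons c u ih =>
    simp only [List.cons_append, gridCoord, ih, List.length_append, pow_add]
    ring

lemma eq_of_gridCoord_eq {w w' : List (Alpha d M)} (hlen : w.length = w'.length)
    (h : ∀ i, gridCoord w i = gridCoord w' i) : w = w' := by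
  induction w generalizing w' with
  | nil => exact (List.length_eq_zero_iff.1 hlen.symm).symm
  | cons c w ih =>
    obtain _ | ⟨c', w'⟩ := w'
    · simp at hlen
    have hlen : w.length = w'.length := by simpa using hlen
    have hsplit (i : Fin d) : (c i : ℕ) = c' i ∧ gridCoord w i = gridCoord w' i := by
      have hi := h i
      have hw := gridCoord_lt w i
      have hw' := gridCoord_lt w' i
      simp only [gridCoord, hlen] at hi hw
      have hci := congrArg (· / M ^ w'.length) hi
      have hpos : 0 < M ^ w'.length := (Nat.zero_le _).trans_lt hw'
      simp only [Nat.add_comm (_ * M ^ w'.length), Nat.add_mul_div_right _ _ hpos,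
        Nat.div_eq_of_lt hw, Nat.div_eq_of_lt hw', zero_add] at hci
      exact ⟨hci, by rw [hci] at hi; omega⟩
    rw [funext fun i => Fin.ext (hsplit i).1, ih hlen fun i => (hsplit i).2]

lemma wordBase_cons (c : Alpha d M) (w : List (Alpha d M)) (i : Fin d) :
    wordBase d M (c :: w) i = (c i : ℝ) / M + wordBase d M w i / M := by
  have hM0 : (M : ℝ) ≠ 0 := Nat.cast_ne_zero.2 (c i).pos.ne'
  unfold wordBase
  refine (Fin.sum_univ_succ (n := w.length) _).trans ?_
  rw [Finset.sum_div]
  congr 1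
  · simp only [Fin.val_zero, Nat.cast_zero, neg_zero, zero_sub, zpow_neg_one, div_eq_mul_inv]
    rfl
  · refine Finset.sum_congr rfl fun j _ => ?_
    rw [mul_div_assoc, div_eq_mul_inv, ← zpow_sub_one₀ hM0, List.get_cons_succ', Fin.val_succ]
    push_cast
    ring_nf

lemma wordBase_eq_gridCoord_div (w : List (Alpha d M)) (i : Fin d) :
    wordBase d M w i = gridCoord w i / (M : ℝ) ^ w.length := by
  induction w with
  | nil => simp [wordBase, gridCoord]
  | cons c w ih =>
    have hM0 : (M : ℝ) ≠ 0 := Nat.cast_ne_zero.2 (c i).pos.ne'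
    rw [wordBase_cons, ih]
    simp only [gridCoord, List.length_cons]
    push_cast
    field_simp
    ring

end GridCoord

section Descendants

variable {d M : ℕ} {p : ℝ}

/-- The words of length `n` extending `u`, indexing the cubes of level `n` inside that of `u`. -/
def descendants (u : List (Alpha d M)) (n : ℕ) : Finset (List (Alpha d M)) :=
  (wordsOfLength d M n).filter fun w => u <+: w

lemma mem_descendants {u w : List (Alpha d M)} {n : ℕ} :
    w ∈ descendants u n ↔ w.length = n ∧ u <+: w := by
  simp [descendants]

lemma descendants_nil (n : ℕ) : descendants ([] : List (Alpha d M)) n = wordsOfLength d M n := by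
  simp [descendants]

lemma card_agreeing_le {T : Finset (List (Alpha d M))} {n : ℕ} (hT : ∀ w ∈ T, w.length = n)
    (v : List (Alpha d M)) (j : ℕ) : (agreeing T v j).card ≤ (M ^ d) ^ (n - j) := by
  rw [← card_wordsOfLength]
  refine Finset.card_le_card_of_injOn (List.drop j) (fun w hw => ?_) fun w hw w' hw' h => ?_
  · simp [hT w (Finset.mem_filter.1 hw).1]
  · rw [← List.take_append_drop j w, ← List.take_append_drop j w', h,
      (Finset.mem_filter.1 hw).2, (Finset.mem_filter.1 hw').2]

lemma sum_Icc_pow_sub_le {b : ℝ} (hb : 1 < b) {m n : ℕ} (hmn : m ≤ n) :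
    ∑ j ∈ Finset.Icc m n, b ^ (n - j) ≤ b / (b - 1) * b ^ (n - m) := by
  have : 0 < b - 1 := sub_pos.2 hb
  have hreflect : ∑ j ∈ Finset.Icc m n, b ^ (n - j) = ∑ j ∈ Finset.range (n - m + 1), b ^ j := by
    have h := Finset.sum_Ico_reflect (fun j => b ^ j) m (le_refl (n + 1))
    rwa [Nat.sub_self, ← Finset.range_eq_Ico, Nat.succ_sub hmn] at h
  rw [hreflect, geom_sum_eq hb.ne', div_mul_eq_mul_div, pow_succ']
  gcongr
  exact sub_le_self _ zero_le_one

lemma hasOverlapBound_descendants (hp0 : 0 ≤ p) (hb : 1 < (M : ℝ) ^ d * p) {u : List (Alpha d M)}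
    {n : ℕ} (hu : u.length ≤ n) :
    HasOverlapBound p (descendants u n) u.length n
      ((M : ℝ) ^ d * p / ((M : ℝ) ^ d * p - 1) * ((M : ℝ) ^ d * p) ^ (n - u.length)) where
  length_eq v hv := (mem_descendants.1 hv).1
  le := hu
  take_eq v hv v' hv' := by
    rw [← List.prefix_iff_eq_take.1 (mem_descendants.1 hv).2,
      ← List.prefix_iff_eq_take.1 (mem_descendants.1 hv').2]
  nonneg := by
    have := sub_pos.2 hb
    positivity
  sum_le v _ := by
    refine (Finset.sum_le_sum fun j _ => ?_).trans (sum_Icc_pow_sub_le hb hu)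
    rw [mul_comm (_ ^ d), mul_pow]
    gcongr
    exact_mod_cast card_agreeing_le (fun w hw => (mem_descendants.1 hw).1) v j

end Descendants

section Strips

variable {M n : ℕ} {p : ℝ} {i j : Fin 2} {a b : ℝ}

open scoped Classical in
/-- The words of length `n` whose grid position `X` is near the line `X i = a * X j + b`; the
tolerance `5` leaves room for rounding `a` and `b` when lines are discretized. -/
def strip (M n : ℕ) (i j : Fin 2) (a b : ℝ) : Finset (List (Alpha 2 M)) :=
  (wordsOfLength 2 M n).filter fun w => |(gridCoord w i : ℝ) - a * gridCoord w j - b| ≤ 5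

lemma mem_strip {w : List (Alpha 2 M)} :
    w ∈ strip M n i j a b ↔ w.length = n ∧ |(gridCoord w i : ℝ) - a * gridCoord w j - b| ≤ 5 := by
  simp [strip]

lemma card_filter_gridCoord_strip_le (hij : i ≠ j) (x : ℕ) :
    ((strip M n i j a b).filter fun w => gridCoord w j = x).card ≤ 11 := by
  set c := a * x + b
  have hcard : (Finset.Icc ⌈c - 5⌉ ⌊c + 5⌋).card ≤ 11 := by
    have hceil : ⌈c - 5⌉ = ⌈c⌉ - 5 := by simp
    have hfloor : ⌊c + 5⌋ = ⌊c⌋ + 5 := by simp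
    have := Int.floor_le_ceil c
    rw [Int.card_Icc, hceil, hfloor]
    omega
  refine (Finset.card_le_card_of_injOn (fun w => (gridCoord w i : ℤ)) (fun w hw => ?_)
    fun w hw w' hw' h => ?_).trans hcard
  · obtain ⟨hw, hx⟩ := Finset.mem_filter.1 hw
    have habs := abs_le.1 (mem_strip.1 hw).2
    rw [hx] at habs
    simp only [Finset.coe_Icc, Set.mem_Icc, Int.ceil_le, Int.le_floor, Int.cast_natCast]
    constructor <;> grind
  · obtain ⟨hw, hx⟩ := Finset.mem_filter.1 hw
    obtain ⟨hw', hx'⟩ := Finset.mem_filter.1 hw'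
    refine eq_of_gridCoord_eq ((mem_strip.1 hw).1.trans (mem_strip.1 hw').1.symm) fun l => ?_
    obtain rfl | rfl : l = i ∨ l = j := by omega
    · exact Int.ofNat_inj.1 h
    · exact hx.trans hx'.symm

lemma card_agreeing_strip_le (hij : i ≠ j) (v : List (Alpha 2 M)) (k : ℕ) :
    (agreeing (strip M n i j a b) v k).card ≤ 11 * M ^ (n - k) := by
  classical
  set S := agreeing (strip M n i j a b) v k
  have hfiber (x : ℕ) : (S.filter fun w => gridCoord w j = x).card ≤ 11 :=
    (Finset.card_le_card (Finset.filter_subset_filter _ (Finset.filter_subset _ _))).trans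
      (card_filter_gridCoord_strip_le hij x)
  have himage : S.image (gridCoord · j) ⊆
      (Finset.range (M ^ (n - k))).image (gridCoord (v.take k) j * M ^ (n - k) + ·) := by
    refine Finset.image_subset_iff.2 fun w hw => ?_
    obtain ⟨hw, htake⟩ := Finset.mem_filter.1 hw
    have hlen : (w.drop k).length = n - k := by rw [List.length_drop, (mem_strip.1 hw).1]
    refine Finset.mem_image.2 ⟨gridCoord (w.drop k) j, ?_, ?_⟩
    · rw [← hlen]
      exact Finset.mem_range.2 (gridCoord_lt _ _)
    · rw [← htake, ← hlen, ← gridCoord_append, List.take_append_drop]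
  calc S.card ≤ 11 * (S.image (gridCoord · j)).card :=
        Finset.card_le_mul_card_image _ _ fun x _ => hfiber x
    _ ≤ 11 * M ^ (n - k) := by
        gcongr
        simpa using (Finset.card_le_card himage).trans Finset.card_image_le

lemma hasOverlapBound_strip (hp0 : 0 ≤ p) (hij : i ≠ j) (n : ℕ) (a b : ℝ) :
    HasOverlapBound p (strip M n i j a b) 0 n (11 * (n + 1) * max 1 (M * p) ^ n) where
  length_eq v hv := (mem_strip.1 hv).1
  le := n.zero_le
  take_eq v _ v' _ := by simp
  nonneg := by positivity
  sum_le v _ := by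
    have hterm (k : ℕ) : p ^ (n - k) * ((agreeing (strip M n i j a b) v k).card : ℝ) ≤
        11 * max 1 (M * p) ^ n := by
      calc p ^ (n - k) * ((agreeing (strip M n i j a b) v k).card : ℝ)
          ≤ p ^ (n - k) * (11 * M ^ (n - k)) := by
            gcongr
            exact_mod_cast card_agreeing_strip_le hij v k
        _ = 11 * (M * p) ^ (n - k) := by rw [mul_pow]; ring
        _ ≤ 11 * max 1 (M * p) ^ (n - k) := by
            gcongr
            exact le_max_right _ _
        _ ≤ 11 * max 1 (M * p) ^ n := by
            gcongr
            · exact le_max_left _ _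
            · exact Nat.sub_le _ _
    refine (Finset.sum_le_sum fun k _ => hterm k).trans_eq ?_
    rw [Finset.sum_const, nsmul_eq_mul, Nat.card_Icc, Nat.sub_zero]
    push_cast
    ring

end Strips

/-! ### Second moments and the good events -/

section Measure

variable {Ω : Type*} {mΩ : MeasurableSpace Ω} {μ : Measure Ω}

/-- The Paley–Zygmund inequality. -/
lemma sq_lintegral_sub_le_lintegral_sq_mul_measure [IsProbabilityMeasure μ] {f : Ω → ℝ≥0∞}
    (hf : Measurable f) (a : ℝ≥0∞) :
    (∫⁻ x, f x ∂μ - a) ^ 2 ≤ (∫⁻ x, f x ^ 2 ∂μ) * μ {x | a ≤ f x} := by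
  set G := {x | a ≤ f x}
  have hG : MeasurableSet G := measurableSet_le measurable_const hf
  have hind : Measurable (G.indicator (1 : Ω → ℝ≥0∞)) := measurable_one.indicator hG
  have hsplit (x : Ω) : f x ≤ a + f x * G.indicator 1 x := by
    by_cases hx : x ∈ G
    · simp [hx]
    · exact (not_le.1 hx).le.trans le_self_add
  have hint : ∫⁻ x, f x ∂μ - a ≤ ∫⁻ x, f x * G.indicator 1 x ∂μ := by
    refine tsub_le_iff_left.2 ((lintegral_mono hsplit).trans_eq ?_)
    rw [lintegral_add_left measurable_const, lintegral_const, measure_univ, mul_one]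
  have hsq : ∫⁻ x, G.indicator (1 : Ω → ℝ≥0∞) x ^ (2 : ℝ) ∂μ = μ G := by
    rw [← lintegral_indicator_one hG]
    refine lintegral_congr fun x => ?_
    by_cases hx : x ∈ G <;> simp [hx]
  have hholder := ENNReal.lintegral_mul_le_Lp_mul_Lq μ Real.HolderConjugate.two_two
    hf.aemeasurable hind.aemeasurable
  rw [hsq, ← ENNReal.mul_rpow_of_nonneg _ _ (by norm_num)] at hholder
  calc (∫⁻ x, f x ∂μ - a) ^ 2
      ≤ (((∫⁻ x, f x ^ (2 : ℝ) ∂μ) * μ G) ^ (1 / 2 : ℝ)) ^ 2 := by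
        gcongr
        exact hint.trans hholder
    _ = (∫⁻ x, f x ^ 2 ∂μ) * μ G := by
        rw [← ENNReal.rpow_mul_natCast]
        simp

lemma le_measure_limsup_atTop [IsFiniteMeasure μ] {s : ℕ → Set Ω} (hs : ∀ n, MeasurableSet (s n))
    {c : ℝ≥0∞} (hc : ∀ n, c ≤ μ (s n)) : c ≤ μ (Filter.limsup s Filter.atTop) := by
  rw [Filter.limsup_eq_iInf_iSup_of_nat]
  refine ge_of_tendsto' (tendsto_measure_iInter_atTop (s := fun n => ⨆ i ≥ n, s i)
    (fun n => ?_) (fun m n hmn => ?_) ⟨0, measure_ne_top _ _⟩) fun n => ?_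
  · exact (MeasurableSet.iUnion fun i => MeasurableSet.iUnion fun _ => hs i).nullMeasurableSet
  · exact biSup_mono fun i hi => hmn.trans hi
  · exact (hc n).trans (measure_mono (le_biSup s (le_refl n)))

end Measure

lemma exists_forall_sum_Icc_le {f : ℕ → ℝ} (hf : Summable f) {ε : ℝ} (hε : 0 < ε) :
    ∃ m₀, ∀ n, ∑ m ∈ Finset.Icc m₀ n, f m ≤ ε := by
  obtain ⟨s, hs⟩ := summable_iff_vanishing_norm.1 hf ε hε
  refine ⟨s.sup id + 1, fun n => (Real.le_norm_self _).trans (hs _ ?_).le⟩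
  refine Finset.disjoint_left.2 fun m hm hms => ?_
  have hle : m ≤ s.sup id := Finset.le_sup (f := id) hms
  have := (Finset.mem_Icc.1 hm).1
  omega

section GoodEvents

variable {d M : ℕ} {p θ : ℝ}

lemma measurableSet_le_retainedCount (T : Finset (List (Alpha d M))) (x : ℝ) :
    MeasurableSet {ω : PercSpace d M | x ≤ retainedCount T ω} :=
  measurableSet_le measurable_const (measurable_natCast_retainedCount T)

lemma IsBernoulliPerc.lintegral_retainedCount_wordsOfLength {P : Measure (PercSpace d M)}
    (hP : IsBernoulliPerc d M p P) (hp0 : 0 ≤ p) (n : ℕ) :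
    ∫⁻ ω, (retainedCount (wordsOfLength d M n) ω : ℝ≥0∞) ∂P =
      ENNReal.ofReal (((M : ℝ) ^ d * p) ^ n) := by
  rw [hP.lintegral_retainedCount fun v => mem_wordsOfLength.1, card_wordsOfLength, mul_pow,
    ENNReal.ofReal_mul (by positivity), ENNReal.ofReal_pow hp0, ← ENNReal.ofReal_natCast]
  push_cast
  rfl

lemma IsBernoulliPerc.exists_forall_le_measure_le_retainedCount {P : Measure (PercSpace d M)}
    (hP : IsBernoulliPerc d M p P) (hp0 : 0 ≤ p) (hp1 : p ≤ 1) (hb : 1 < (M : ℝ) ^ d * p) :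
    ∃ δ : ℝ, 0 < δ ∧ ∀ n, ENNReal.ofReal δ ≤
      P {ω | ((M : ℝ) ^ d * p) ^ n / 2 ≤ retainedCount (wordsOfLength d M n) ω} := by
  have := hP.1
  set b := (M : ℝ) ^ d * p
  set C := b / (b - 1)
  have : 0 < C := div_pos (by linarith) (by linarith)
  refine ⟨1 / (16 * C ^ 2), by positivity, fun n => ?_⟩
  have : 0 < b ^ n := by positivity
  set G := {ω | b ^ n / 2 ≤ retainedCount (wordsOfLength d M n) ω}
  have hsecond : ∫⁻ ω, (retainedCount (wordsOfLength d M n) ω : ℝ≥0∞) ^ 2 ∂P ≤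
      ENNReal.ofReal ((2 * (C * b ^ n)) ^ 2) := by
    simpa [descendants_nil] using hP.lintegral_retainedCount_pow_le hp0 hp1
      (hasOverlapBound_descendants hp0 hb (u := []) n.zero_le) 2
  have hpz := sq_lintegral_sub_le_lintegral_sq_mul_measure (μ := P)
    (measurable_natCast_retainedCount (wordsOfLength d M n)) (ENNReal.ofReal (b ^ n / 2))
  have hG : {ω | ENNReal.ofReal (b ^ n / 2) ≤
      (retainedCount (wordsOfLength d M n) ω : ℝ≥0∞)} = G := by
    ext ω
    simp [G, ENNReal.ofReal_le_natCast]
  have hreal : (b ^ n / 2) ^ 2 ≤ (2 * (C * b ^ n)) ^ 2 * P.real G := by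
    rw [hP.lintegral_retainedCount_wordsOfLength hp0, hG,
      ← ENNReal.ofReal_sub _ (by positivity), sub_self_div_two,
      ← ENNReal.ofReal_pow (by positivity)] at hpz
    have h := hpz.trans (mul_le_mul_left hsecond _)
    rwa [← ofReal_measureReal, ← ENNReal.ofReal_mul (by positivity),
      ENNReal.ofReal_le_ofReal_iff (by positivity)] at h
  rw [← ofReal_measureReal]
  refine ENNReal.ofReal_le_ofReal ((div_le_iff₀' (by positivity)).2 ?_)
  refine le_of_mul_le_mul_left (a := (b ^ n) ^ 2 / 4) ?_ (by positivity)
  linarith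

lemma IsBernoulliPerc.measure_exists_le_retainedCount_le {P : Measure (PercSpace d M)}
    (hP : IsBernoulliPerc d M p P) (hp0 : 0 ≤ p) (hp1 : p ≤ 1) {ι : Type*} {S : Finset ι}
    {T : ι → Finset (List (Alpha d M))} {m n : ℕ} {R x : ℝ}
    (hT : ∀ i ∈ S, HasOverlapBound p (T i) m n R) (hx : 0 < x) (k : ℕ) :
    P {ω | ∃ i ∈ S, x ≤ retainedCount (T i) ω} ≤ ENNReal.ofReal (S.card * (k * R / x) ^ k) := by
  rw [show {ω | ∃ i ∈ S, x ≤ retainedCount (T i) ω} = ⋃ i ∈ S, {ω | x ≤ retainedCount (T i) ω} by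
    ext; simp]
  refine (measure_biUnion_finset_le _ _).trans ((Finset.sum_le_sum fun i hi =>
    hP.measure_le_retainedCount_le hp0 hp1 (hT i hi) hx k).trans_eq ?_)
  rw [Finset.sum_const, nsmul_eq_mul, ENNReal.ofReal_mul (by positivity), ENNReal.ofReal_natCast]

/-- The event that some cube of level `m` has far more retained descendants of level `n` than
expected. -/
def crowdedCube (d M : ℕ) (p θ : ℝ) (n m : ℕ) : Set (PercSpace d M) :=
  {ω | ∃ u ∈ wordsOfLength d M m,
    θ ^ m * ((M : ℝ) ^ d * p) ^ (n - m) ≤ retainedCount (descendants u n) ω}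

/-- Indices `(i, j)`, `i ≠ j`, with discretized slopes in `[-1, 1]` and intercepts in `[-4, 4]`,
both in units of `M⁻ᵐ`. -/
def stripIndices (M m : ℕ) : Finset ((Fin 2 × Fin 2) × ℤ × ℤ) :=
  Finset.univ.offDiag ×ˢ
    Finset.Icc (-(M ^ m : ℤ)) (M ^ m) ×ˢ Finset.Icc (-4 * (M ^ m : ℤ)) (4 * M ^ m)

/-- The strip of level `m` with the given indices. -/
def indexedStrip (M m : ℕ) (x : (Fin 2 × Fin 2) × ℤ × ℤ) : Finset (List (Alpha 2 M)) :=
  strip M m x.1.1 x.1.2 (x.2.1 / (M : ℝ) ^ m) x.2.2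

/-- The event that some strip of level `m` contains far more retained cubes than expected. -/
def crowdedStrip (M : ℕ) (p θ : ℝ) (m : ℕ) : Set (PercSpace 2 M) :=
  {ω | ∃ x ∈ stripIndices M m,
    11 * (m + 1) * (θ * max 1 (M * p)) ^ m ≤ retainedCount (indexedStrip M m x) ω}

/-- The event that there are many retained cubes of level `n`, and that from level `m₀` on, these
are spread out evenly over the plane and over all strips. -/
def goodEvent (M : ℕ) (p θ : ℝ) (m₀ n : ℕ) : Set (PercSpace 2 M) :=
  {ω | ((M : ℝ) ^ 2 * p) ^ n / 2 ≤ retainedCount (wordsOfLength 2 M n) ω} \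
    ⋃ m ∈ Finset.Icc m₀ n, crowdedCube 2 M p θ n m ∪ crowdedStrip M p θ m

lemma measurableSet_goodEvent (m₀ n : ℕ) : MeasurableSet (goodEvent M p θ m₀ n) := by
  have hexists {ι : Type} (S : Finset ι) (T : ι → Finset (List (Alpha 2 M))) (x : ℝ) :
      MeasurableSet {ω | ∃ i ∈ S, x ≤ retainedCount (T i) ω} := by
    simp only [← exists_prop, ofPred_exists]
    exact Finset.measurableSet_biUnion _ fun i _ => measurableSet_le_retainedCount _ _
  exact (measurableSet_le_retainedCount _ _).diff <| Finset.measurableSet_biUnion _ fun m _ =>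
    (hexists _ _ _).union (hexists _ _ _)

lemma card_stripIndices_le [NeZero M] (m : ℕ) :
    ((stripIndices M m).card : ℝ) ≤ 54 * ((M : ℝ) ^ 2) ^ m := by
  have hpos : 1 ≤ (M : ℤ) ^ m := by exact_mod_cast Nat.one_le_pow _ _ (NeZero.pos M)
  have hslope : ((Finset.Icc (-(M ^ m : ℤ)) (M ^ m)).card : ℤ) ≤ 3 * M ^ m := by
    rw [Int.card_Icc, Int.toNat_of_nonneg (by linarith)]
    linarith
  have hintercept : ((Finset.Icc (-4 * (M ^ m : ℤ)) (4 * M ^ m)).card : ℤ) ≤ 9 * M ^ m := by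
    rw [Int.card_Icc, Int.toNat_of_nonneg (by linarith)]
    linarith
  have hcard : ((stripIndices M m).card : ℤ) ≤ 2 * ((3 * M ^ m) * (9 * M ^ m)) := by
    rw [stripIndices, Finset.card_product, Finset.card_product]
    push_cast
    gcongr
    exact_mod_cast (by decide : (Finset.univ (α := Fin 2)).offDiag.card ≤ 2)
  calc ((stripIndices M m).card : ℝ) ≤ 2 * ((3 * M ^ m) * (9 * M ^ m)) := by exact_mod_cast hcard
    _ = 54 * ((M : ℝ) ^ 2) ^ m := by ring

lemma IsBernoulliPerc.measure_crowdedCube_le {P : Measure (PercSpace d M)}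
    (hP : IsBernoulliPerc d M p P) (hp0 : 0 ≤ p) (hp1 : p ≤ 1) (hb : 1 < (M : ℝ) ^ d * p)
    (hθ : 0 < θ) {m n : ℕ} (hmn : m ≤ n) (k : ℕ) :
    P (crowdedCube d M p θ n m) ≤ ENNReal.ofReal
      ((k * ((M : ℝ) ^ d * p / ((M : ℝ) ^ d * p - 1))) ^ k * ((M : ℝ) ^ d / θ ^ k) ^ m) := by
  have hT (u) (hu : u ∈ wordsOfLength d M m) : HasOverlapBound p (descendants u n) m n
      ((M : ℝ) ^ d * p / ((M : ℝ) ^ d * p - 1) * ((M : ℝ) ^ d * p) ^ (n - m)) := by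
    obtain rfl := mem_wordsOfLength.1 hu
    exact hasOverlapBound_descendants hp0 hb hmn
  refine (hP.measure_exists_le_retainedCount_le hp0 hp1 hT (by positivity) k).trans_eq ?_
  congr 1
  rw [card_wordsOfLength, ← mul_assoc, mul_div_mul_right _ _ (by positivity), div_pow, div_pow,
    pow_right_comm θ]
  push_cast
  ring

lemma IsBernoulliPerc.measure_crowdedStrip_le [NeZero M] {P : Measure (PercSpace 2 M)}
    (hP : IsBernoulliPerc 2 M p P) (hp0 : 0 ≤ p) (hp1 : p ≤ 1) (hθ : 0 < θ) (m k : ℕ) :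
    P (crowdedStrip M p θ m) ≤ ENNReal.ofReal (54 * k ^ k * ((M : ℝ) ^ 2 / θ ^ k) ^ m) := by
  have hT (x) (hx : x ∈ stripIndices M m) : HasOverlapBound p (indexedStrip M m x) 0 m _ :=
    hasOverlapBound_strip hp0 (Finset.mem_offDiag.1 (Finset.mem_product.1 hx).1).2.2 _ _ _
  refine (hP.measure_exists_le_retainedCount_le hp0 hp1 hT (by positivity) k).trans ?_
  refine ENNReal.ofReal_le_ofReal ?_
  have hratio : k * (11 * (m + 1) * max 1 (M * p) ^ m) /
      (11 * (m + 1) * (θ * max 1 (M * p)) ^ m) = k / θ ^ m := by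
    rw [mul_pow]
    field_simp
  calc ((stripIndices M m).card : ℝ) * (k * (11 * (m + 1) * max 1 (M * p) ^ m) /
        (11 * (m + 1) * (θ * max 1 (M * p)) ^ m)) ^ k
      ≤ 54 * ((M : ℝ) ^ 2) ^ m * (k / θ ^ m) ^ k := by
        rw [hratio]
        gcongr
        exact card_stripIndices_le m
    _ = 54 * k ^ k * ((M : ℝ) ^ 2 / θ ^ k) ^ m := by
        rw [div_pow, div_pow, pow_right_comm θ]
        ring

lemma IsBernoulliPerc.exists_forall_le_measure_goodEvent [NeZero M] {P : Measure (PercSpace 2 M)}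
    (hP : IsBernoulliPerc 2 M p P) (hp0 : 0 ≤ p) (hp1 : p ≤ 1) (hb : 1 < (M : ℝ) ^ 2 * p)
    (hθ : 1 < θ) :
    ∃ (δ : ℝ) (m₀ : ℕ), 0 < δ ∧ ∀ n, ENNReal.ofReal δ ≤ P (goodEvent M p θ m₀ n) := by
  have hθ0 : 0 < θ := one_pos.trans hθ
  obtain ⟨δ, hδ, hmany⟩ := hP.exists_forall_le_measure_le_retainedCount hp0 hp1 hb
  obtain ⟨k, hk⟩ := pow_unbounded_of_one_lt ((M : ℝ) ^ 2) hθ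
  have : 0 ≤ (M : ℝ) ^ 2 * p / ((M : ℝ) ^ 2 * p - 1) := div_nonneg (by linarith) (by linarith)
  set C := (k * ((M : ℝ) ^ 2 * p / ((M : ℝ) ^ 2 * p - 1))) ^ k
  have : 0 ≤ C := by positivity
  set r := (M : ℝ) ^ 2 / θ ^ k
  have hr : Summable fun m => (C + 54 * k ^ k) * r ^ m :=
    (summable_geometric_of_lt_one (by positivity) ((div_lt_one (by positivity)).2 hk)).mul_left _
  obtain ⟨m₀, hm₀⟩ := exists_forall_sum_Icc_le hr (half_pos hδ)
  refine ⟨δ / 2, m₀, half_pos hδ, fun n => ?_⟩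
  set Crowded := ⋃ m ∈ Finset.Icc m₀ n, crowdedCube 2 M p θ n m ∪ crowdedStrip M p θ m
  have hcrowded : P Crowded ≤ ENNReal.ofReal (δ / 2) := by
    refine (measure_biUnion_finset_le _ _).trans ?_
    refine le_trans ?_ (ENNReal.ofReal_le_ofReal (hm₀ n))
    rw [ENNReal.ofReal_sum_of_nonneg fun m _ => by positivity]
    refine Finset.sum_le_sum fun m hm => ?_
    rw [add_mul, ENNReal.ofReal_add (by positivity) (by positivity)]
    exact (measure_union_le _ _).trans (add_le_add
      (hP.measure_crowdedCube_le hp0 hp1 hb hθ0 (Finset.mem_Icc.1 hm).2 k)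
      (hP.measure_crowdedStrip_le hp0 hp1 hθ0 m k))
  calc ENNReal.ofReal (δ / 2) = ENNReal.ofReal δ - ENNReal.ofReal (δ / 2) := by
        rw [← ENNReal.ofReal_sub _ (half_pos hδ).le, sub_self_div_two]
    _ ≤ _ := (tsub_le_tsub (hmany n) hcrowded).trans le_measure_sdiff

end GoodEvents

/-! ### Cubes and level sets -/

section Cubes

open Metric

variable {d M : ℕ}

lemma wordCube_eq_preimage (w : List (Alpha d M)) :
    wordCube d M w = WithLp.ofLp ⁻¹' Icc (wordBase d M w)
      (fun i => wordBase d M w i + (M : ℝ) ^ (-(w.length : ℤ))) := by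
  ext x
  simp [wordCube, Pi.le_def, forall_and]

lemma isCompact_wordCube (w : List (Alpha d M)) : IsCompact (wordCube d M w) := by
  rw [wordCube_eq_preimage]
  exact (PiLp.homeomorph 2 fun _ : Fin d => ℝ).isCompact_preimage.2 isCompact_Icc

lemma ediam_wordCube_le (w : List (Alpha d M)) :
    ediam (wordCube d M w) ≤
      ENNReal.ofReal (√d) * ENNReal.ofReal ((M : ℝ)⁻¹ ^ w.length) := by
  rw [wordCube_eq_preimage, ← pi_univ_Icc]
  refine ((PiLp.antilipschitzWith_ofLp 2 fun _ : Fin d => ℝ).ediam_preimage_le _).trans ?_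
  gcongr
  · rw [Real.sqrt_eq_rpow, ← ENNReal.ofReal_coe_nnreal]
    simp
  · refine ediam_pi_le_of_le fun i => ?_
    rw [Real.ediam_Icc, add_sub_cancel_left, zpow_neg, zpow_natCast, inv_pow]

lemma toLp_wordBase_mem_wordCube (w : List (Alpha d M)) :
    WithLp.toLp 2 (wordBase d M w) ∈ wordCube d M w :=
  fun _ => ⟨le_rfl, le_add_of_nonneg_right (by positivity)⟩

lemma mem_wordCube [NeZero M] {w : List (Alpha d M)} {x : EuclideanSpace ℝ (Fin d)} :
    x ∈ wordCube d M w ↔ ∀ i, (gridCoord w i : ℝ) ≤ x i * (M : ℝ) ^ w.length ∧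
      x i * (M : ℝ) ^ w.length ≤ gridCoord w i + 1 := by
  have hK : (0 : ℝ) < (M : ℝ) ^ w.length := pow_pos (Nat.cast_pos.2 (NeZero.pos M)) _
  refine forall_congr' fun i => ?_
  rw [wordBase_eq_gridCoord_div, zpow_neg, zpow_natCast, ← one_div, ← add_div,
    div_le_iff₀ hK, le_div_iff₀ hK]

lemma wordCube_subset_of_prefix [NeZero M] {u w : List (Alpha d M)} (h : u <+: w) :
    wordCube d M w ⊆ wordCube d M u := by
  obtain ⟨v, rfl⟩ := h
  intro x hx
  rw [mem_wordCube] at hx ⊢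
  intro i
  have hv : (gridCoord v i : ℝ) + 1 ≤ (M : ℝ) ^ v.length := mod_cast gridCoord_lt v i
  have hK : (0 : ℝ) < (M : ℝ) ^ v.length := pow_pos (Nat.cast_pos.2 (NeZero.pos M)) _
  obtain ⟨hlo, hhi⟩ := hx i
  rw [gridCoord_append, List.length_append, pow_add, ← mul_assoc] at hlo hhi
  push_cast at hlo hhi
  constructor
  · refine le_of_mul_le_mul_right ?_ hK
    linarith [Nat.cast_nonneg (α := ℝ) (gridCoord v i)]
  · refine le_of_mul_le_mul_right ?_ hK
    linarith

lemma mem_Icc_of_mem_wordCube [NeZero M] {w : List (Alpha d M)} {x : EuclideanSpace ℝ (Fin d)}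
    (hx : x ∈ wordCube d M w) (i : Fin d) : x i ∈ Icc (0 : ℝ) 1 := by
  simpa [gridCoord] using mem_wordCube.1 (wordCube_subset_of_prefix (List.nil_prefix) hx) i

lemma mem_approx {ω : PercSpace d M} {n : ℕ} {x : EuclideanSpace ℝ (Fin d)} :
    x ∈ approx d M ω n ↔ ∃ w, (w.length = n ∧ Retained d M ω w) ∧ x ∈ wordCube d M w := by
  simp [approx]

lemma isCompact_approx (ω : PercSpace d M) (n : ℕ) : IsCompact (approx d M ω n) := by
  refine Set.Finite.isCompact_biUnion ?_ fun w _ => isCompact_wordCube w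
  exact (wordsOfLength d M n).finite_toSet.subset fun w hw => by simpa using hw.1

lemma antitone_approx [NeZero M] (ω : PercSpace d M) : Antitone (approx d M ω) := by
  intro m n hmn x hx
  obtain ⟨w, ⟨hw, hr⟩, hx⟩ := mem_approx.1 hx
  exact mem_approx.2 ⟨w.take m, ⟨by simp [hw, hmn], hr.of_prefix (List.take_prefix _ _)⟩,
    wordCube_subset_of_prefix (List.take_prefix _ _) hx⟩

lemma percLimit_eq_iInter [NeZero M] (ω : PercSpace d M) :
    percLimit d M ω = ⋂ n, approx d M ω n := by
  refine subset_antisymm (subset_iInter fun n => ?_) (subset_iInter₂ fun n _ => iInter_subset _ n)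
  exact (biInter_subset_of_mem (mem_ofPred_eq ▸ n.succ_pos)).trans
    (antitone_approx ω n.le_succ)

lemma percLimit_eq_empty_of_mem_extinction [NeZero M] {ω : PercSpace d M}
    (h : ω ∈ extinction d M) : percLimit d M ω = ∅ := by
  obtain ⟨n, hn⟩ := h
  rw [eq_empty_iff_forall_notMem]
  intro x hx
  rw [percLimit_eq_iInter] at hx
  obtain ⟨w, ⟨hw, hr⟩, -⟩ := mem_approx.1 (mem_iInter.1 hx n)
  exact hn w (mem_wordsOfLength.2 hw) hr

/-- The similarity of ratio `1 / M` carrying the unit cube onto the level-one cube with index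
`c`. -/
def cubeMap (c : Alpha d M) (x : EuclideanSpace ℝ (Fin d)) : EuclideanSpace ℝ (Fin d) :=
  WithLp.toLp 2 fun i => ((c i : ℕ) + x i) / (M : ℝ)

lemma cubeMap_mem_wordCube [NeZero M] {c : Alpha d M} {w : List (Alpha d M)}
    {x : EuclideanSpace ℝ (Fin d)} (hx : x ∈ wordCube d M w) :
    cubeMap c x ∈ wordCube d M (c :: w) := by
  have hM : (M : ℝ) ≠ 0 := NeZero.ne _
  rw [mem_wordCube] at hx ⊢
  intro i
  have hscale : cubeMap c x i * (M : ℝ) ^ (c :: w).length =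
      (c i : ℕ) * (M : ℝ) ^ w.length + x i * (M : ℝ) ^ w.length := by
    simp only [cubeMap, List.length_cons, pow_succ]
    field_simp
  have hcoord : (gridCoord (c :: w) i : ℝ) = (c i : ℕ) * (M : ℝ) ^ w.length + gridCoord w i := by
    simp [gridCoord]
  rw [hscale, hcoord]
  constructor <;> linarith [hx i]

lemma cubeMap_mem_percLimit [NeZero M] {ω : PercSpace d M} {c : Alpha d M}
    (hc : ω ⟨[c], List.cons_ne_nil _ _⟩ = true) {x : EuclideanSpace ℝ (Fin d)}
    (hx : x ∈ percLimit d M (subtreeLabels c ω)) : cubeMap c x ∈ percLimit d M ω := by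
  rw [percLimit_eq_iInter, mem_iInter] at hx ⊢
  intro n
  obtain ⟨w, ⟨hw, hr⟩, hx⟩ := mem_approx.1 (hx n)
  exact antitone_approx ω n.le_succ
    (mem_approx.2 ⟨c :: w, ⟨by simp [hw], retained_cons.2 ⟨hc, hr⟩⟩, cubeMap_mem_wordCube hx⟩)

end Cubes

/-! ### Dimension lower bounds from finite covers by balls -/

section Hausdorff

open Metric
open scoped NNReal

lemma exists_cover_tsum_lt_of_hausdorffMeasure_eq_zero {X : Type*} [EMetricSpace X]
    [MeasurableSpace X] [BorelSpace X] {S : Set X} {t : ℝ} (ht : 0 ≤ t) (hS : μH[t] S = 0)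
    {η : ℝ≥0∞} (hη : η ≠ 0) :
    ∃ (U : ℕ → Set X) (ρ : ℕ → ℝ≥0), S ⊆ ⋃ n, U n ∧ (∀ n, 0 < ρ n) ∧
      (∀ n, ∀ x ∈ U n, ∀ y ∈ U n, edist x y ^ t < ρ n) ∧
      ∑' n, (ρ n : ℝ≥0∞) < η := by
  have hη2 : η / 2 ≠ 0 := by simpa using hη
  rw [Measure.hausdorffMeasure_apply] at hS
  have hinf := (iSup₂_le_iff.1 hS.le 1 one_pos).trans_lt (pos_iff_ne_zero.2 hη2)
  simp only [iInf_lt_iff] at hinf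
  obtain ⟨U, hSU, -, hU⟩ := hinf
  set D : ℕ → ℝ≥0∞ := fun n => ⨆ _ : (U n).Nonempty, ediam (U n) ^ t
  have hD (n) : D n ≠ ∞ := ((ENNReal.le_tsum n).trans_lt hU).ne_top
  obtain ⟨τ, hτ0, hτ⟩ := ENNReal.exists_pos_sum_of_countable hη2 ℕ
  refine ⟨U, fun n => (D n).toNNReal + τ n, hSU,
    fun n => add_pos_of_nonneg_of_pos zero_le (hτ0 n), fun n x hx y hy => ?_, ?_⟩
  · have hxy : edist x y ^ t ≤ D n :=
      (ENNReal.rpow_le_rpow (edist_le_ediam_of_mem hx hy) ht).trans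
        (le_iSup (fun _ : (U n).Nonempty => ediam (U n) ^ t) ⟨x, hx⟩)
    rw [ENNReal.coe_add, ENNReal.coe_toNNReal (hD n)]
    exact hxy.trans_lt (ENNReal.lt_add_right (hD n) (by simpa using (hτ0 n).ne'))
  · simp only [ENNReal.coe_add, ENNReal.coe_toNNReal (hD _)]
    rw [ENNReal.tsum_add, ← ENNReal.add_halves η]
    exact ENNReal.add_lt_add hU hτ

lemma exists_cover_ball_pow_of_hausdorffMeasure_eq_zero {X : Type*} [MetricSpace X] [Nonempty X]
    [MeasurableSpace X] [BorelSpace X] {S : Set X} {t r ε : ℝ} (hS : μH[t] S = 0) (ht : 0 < t)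
    (hr0 : 0 < r) (hr1 : r < 1) (hε : 0 < ε) :
    ∃ (x : ℕ → X) (m : ℕ → ℕ), S ⊆ ⋃ k, ball (x k) (r ^ m k) ∧
      ∀ s : Finset ℕ, ∑ k ∈ s, (r ^ t) ^ m k ≤ ε := by
  have hY0 : 0 < r ^ t := by positivity
  have hY1 : r ^ t < 1 := Real.rpow_lt_one hr0.le hr1 ht
  have hη : 0 < min 1 (ε * r ^ t) := by positivity
  obtain ⟨U, ρ, hSU, hρ0, hU, hρ⟩ := exists_cover_tsum_lt_of_hausdorffMeasure_eq_zero ht.le hS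
    (ENNReal.ofReal_pos.2 hη).ne'
  have hsum (s : Finset ℕ) : ∑ k ∈ s, (ρ k : ℝ) ≤ min 1 (ε * r ^ t) := by
    have h := (ENNReal.sum_le_tsum s).trans hρ.le
    rw [← ENNReal.ofNNReal_toNNReal, ← ENNReal.ofNNReal_finsetSum, ENNReal.coe_le_coe] at h
    simpa [hη.le] using NNReal.coe_le_coe.2 h
  have hρ1 (n) : (ρ n : ℝ) ≤ 1 := by simpa using (hsum {n}).trans (min_le_left _ _)
  choose m hlt hle using fun n =>
    exists_nat_pow_near_of_lt_one (NNReal.coe_pos.2 (hρ0 n)) (hρ1 n) hY0 hY1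
  have hball (n) : ∃ x, U n ⊆ ball x (r ^ m n) := by
    rcases (U n).eq_empty_or_nonempty with hn | ⟨x, hx⟩
    · exact ⟨Classical.arbitrary X, hn ▸ empty_subset _⟩
    refine ⟨x, fun y hy => ?_⟩
    have hxy := hU n y hy x hx
    rw [edist_dist, ENNReal.ofReal_rpow_of_nonneg dist_nonneg ht.le,
      ← ENNReal.ofReal_coe_nnreal, ENNReal.ofReal_lt_ofReal_iff (NNReal.coe_pos.2 (hρ0 n))] at hxy
    refine (Real.rpow_lt_rpow_iff dist_nonneg (by positivity) ht).1 (hxy.trans_le ?_)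
    rw [← Real.rpow_natCast_mul hr0.le, mul_comm, Real.rpow_mul_natCast hr0.le]
    exact hle n
  choose x hx using hball
  refine ⟨x, m, hSU.trans (iUnion_mono hx), fun s => le_of_mul_le_mul_right ?_ hY0⟩
  calc (∑ k ∈ s, (r ^ t) ^ m k) * r ^ t = ∑ k ∈ s, (r ^ t) ^ (m k + 1) := by
        simp only [Finset.sum_mul, pow_succ]
    _ ≤ ∑ k ∈ s, (ρ k : ℝ) := Finset.sum_le_sum fun k _ => (hlt k).le
    _ ≤ ε * r ^ t := (hsum s).trans (min_le_right _ _)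

lemma exists_finset_image_subset_of_image_iInter_subset {X Y ι : Type*} [TopologicalSpace X]
    [T2Space X] [TopologicalSpace Y] {K : ℕ → Set X} (hK : Antitone K)
    (hKc : ∀ n, IsCompact (K n)) {f : X → Y} (hf : Continuous f) {U : ι → Set Y}
    (hU : ∀ k, IsOpen (U k)) (hcov : f '' ⋂ n, K n ⊆ ⋃ k, U k) :
    ∃ (s : Finset ι) (N : ℕ), f '' K N ⊆ ⋃ k ∈ s, U k := by
  have hopen : IsOpen (f ⁻¹' ⋃ k, U k) := (isOpen_iUnion hU).preimage hf
  obtain ⟨N, hN⟩ := exists_subset_nhds_of_isCompact hK.directed_ge hKc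
    fun x hx => hopen.mem_nhds (image_subset_iff.1 hcov hx)
  obtain ⟨s, hs⟩ := ((hKc N).image hf).elim_finite_subcover U hU (image_subset_iff.2 hN)
  exact ⟨s, N, hs⟩

lemma ofReal_le_dimH_image_iInter {X Y : Type*} [TopologicalSpace X] [T2Space X] [MetricSpace Y]
    [Nonempty Y] {K : ℕ → Set X} (hK : Antitone K) (hKc : ∀ n, IsCompact (K n)) {f : X → Y}
    (hf : Continuous f) {t r c : ℝ} (m₀ : ℕ) (ht : 0 < t) (hr0 : 0 < r) (hr1 : r < 1) (hc : 0 < c)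
    (hsum : ∀ (s : Finset ℕ) (x : ℕ → Y) (m : ℕ → ℕ), (∀ k, m₀ ≤ m k) →
      (∃ N, f '' K N ⊆ ⋃ k ∈ s, ball (x k) (r ^ m k)) → c ≤ ∑ k ∈ s, (r ^ t) ^ m k) :
    ENNReal.ofReal t ≤ dimH (f '' ⋂ n, K n) := by
  borelize Y
  refine le_dimH_of_hausdorffMeasure_ne_zero (d := t.toNNReal) fun hzero => ?_
  rw [Real.coe_toNNReal t ht.le] at hzero
  have hY0 : 0 < r ^ t := by positivity
  have hY1 : r ^ t < 1 := Real.rpow_lt_one hr0.le hr1 ht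
  obtain ⟨x, m, hcov, hle⟩ := exists_cover_ball_pow_of_hausdorffMeasure_eq_zero hzero ht hr0 hr1
    (show 0 < min ((r ^ t) ^ m₀) (c / 2) by positivity)
  have hm (k) : m₀ ≤ m k := (pow_le_pow_iff_right_of_lt_one₀ hY0 hY1).1 <| by
    simpa using (hle {k}).trans (min_le_left _ _)
  obtain ⟨s, hs⟩ := exists_finset_image_subset_of_image_iInter_subset hK hKc hf
    (fun k => isOpen_ball (x := x k) (ε := r ^ m k)) hcov
  linarith [hsum s x m hm hs, (hle s).trans (min_le_right _ _)]

end Hausdorff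

section Growth

lemma exists_forall_succ_mul_pow_mul_pow_le {κ ρ : ℝ} (hκ : 0 < κ) (hκρ : κ < ρ) :
    ∃ θ C : ℝ, 1 < θ ∧ 0 < C ∧ ∀ m : ℕ, (m + 1) * (θ * κ) ^ m * θ ^ m ≤ C * ρ ^ m := by
  have hr : 1 < ρ / κ := (one_lt_div hκ).2 hκρ
  set θ := (ρ / κ) ^ (3⁻¹ : ℝ)
  have hθ : 1 < θ := Real.one_lt_rpow hr (by norm_num)
  have hθ3 : θ ^ 3 = ρ / κ := by
    simpa using Real.rpow_inv_natCast_pow (zero_le_one.trans hr.le) (three_ne_zero (α := ℕ))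
  have hsub : 0 < θ - 1 := sub_pos.2 hθ
  refine ⟨θ, 1 + 1 / (θ - 1), hθ, by positivity, fun m => ?_⟩
  have hbernoulli : 1 + (m : ℝ) * (θ - 1) ≤ θ ^ m := by
    simpa using one_add_mul_le_pow (show (-2 : ℝ) ≤ θ - 1 by linarith) m
  have hlin : (m : ℝ) + 1 ≤ (1 + 1 / (θ - 1)) * θ ^ m := by
    have : (m : ℝ) ≤ 1 / (θ - 1) * θ ^ m := by
      rw [one_div, ← div_eq_inv_mul, le_div_iff₀ hsub]
      linarith
    linarith [one_le_pow₀ hθ.le (n := m)]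
  calc (m + 1) * (θ * κ) ^ m * θ ^ m
      ≤ (1 + 1 / (θ - 1)) * θ ^ m * (θ * κ) ^ m * θ ^ m := by gcongr
    _ = (1 + 1 / (θ - 1)) * (θ ^ 3 * κ) ^ m := by ring
    _ = (1 + 1 / (θ - 1)) * ρ ^ m := by rw [hθ3, div_mul_cancel₀ _ hκ.ne']

end Growth

/-! ### Skew projections -/

section SkewProj

variable {d M : ℕ}

lemma retainedCount_wordsOfLength_le_sum {ι : Type*} {n : ℕ} {ω : PercSpace d M} (s : Finset ι)
    {T : ι → Finset (List (Alpha d M))} {B : ι → ℝ}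
    (hT : ∀ w, w.length = n → Retained d M ω w → ∃ k ∈ s, ∃ u ∈ T k, u <+: w)
    (hB : ∀ k ∈ s, ∀ u ∈ T k, retainedCount (descendants u n) ω ≤ B k) :
    retainedCount (wordsOfLength d M n) ω ≤ ∑ k ∈ s, retainedCount (T k) ω * B k := by
  classical
  have hcover : (wordsOfLength d M n).filter (Retained d M ω) ⊆ s.biUnion fun k =>
      ((T k).filter (Retained d M ω)).biUnion fun u =>
        (descendants u n).filter (Retained d M ω) := by
    intro w hw
    simp only [Finset.mem_filter, mem_wordsOfLength] at hw
    obtain ⟨k, hk, u, hu, huw⟩ := hT w hw.1 hw.2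
    simp only [Finset.mem_biUnion, Finset.mem_filter, mem_descendants]
    exact ⟨k, hk, u, ⟨hu, hw.2.of_prefix huw⟩, ⟨hw.1, huw⟩, hw.2⟩
  have hcount : retainedCount (wordsOfLength d M n) ω ≤
      ∑ k ∈ s, ∑ u ∈ (T k).filter (Retained d M ω), retainedCount (descendants u n) ω := by
    simp only [retainedCount]
    convert (Finset.card_le_card hcover).trans (Finset.card_biUnion_le.trans
      (Finset.sum_le_sum fun k _ => Finset.card_biUnion_le))
  calc (retainedCount (wordsOfLength d M n) ω : ℝ)
      ≤ ∑ k ∈ s, ∑ u ∈ (T k).filter (Retained d M ω), (retainedCount (descendants u n) ω : ℝ) :=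
        mod_cast hcount
    _ ≤ ∑ k ∈ s, ∑ _u ∈ (T k).filter (Retained d M ω), B k :=
        Finset.sum_le_sum fun k hk => Finset.sum_le_sum fun _ hu =>
          hB k hk _ (Finset.filter_subset _ _ hu)
    _ = ∑ k ∈ s, retainedCount (T k) ω * B k := by
        simp only [Finset.sum_const, nsmul_eq_mul, retainedCount]

/-- The projection of the plane onto the `i`-th axis along the direction in which the coordinates
`i`, `j` grow in proportion `a : 1`. Up to scaling, every orthogonal projection onto a line is of
this form with `|a| ≤ 1`. -/
def skewProj (i j : Fin 2) (a : ℝ) (x : EuclideanSpace ℝ (Fin 2)) : ℝ :=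
  x i - a * x j

variable {i j : Fin 2} {a b : ℝ}

lemma continuous_skewProj : Continuous (skewProj i j a) := by
  unfold skewProj
  fun_prop

lemma mem_strip_of_mem_wordCube [NeZero M] {u : List (Alpha 2 M)} (ha : |a| ≤ 1)
    {y : EuclideanSpace ℝ (Fin 2)} (hy : y ∈ wordCube 2 M u)
    (hb : |skewProj i j a y - b| ≤ (M : ℝ)⁻¹ ^ u.length) :
    u ∈ strip M u.length i j (⌊a * (M : ℝ) ^ u.length⌋ / (M : ℝ) ^ u.length)
      ⌊b * (M : ℝ) ^ u.length⌋ := by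
  refine mem_strip.2 ⟨rfl, ?_⟩
  have hyi := mem_wordCube.1 hy i
  have hyj := mem_wordCube.1 hy j
  have hK : (0 : ℝ) < (M : ℝ) ^ u.length := pow_pos (Nat.cast_pos.2 (NeZero.pos M)) _
  have hlt : (gridCoord u j : ℝ) ≤ (M : ℝ) ^ u.length := mod_cast (gridCoord_lt u j).le
  rw [inv_pow, skewProj] at hb
  set K := (M : ℝ) ^ u.length
  have hscaled : |y i * K - a * (y j * K) - b * K| ≤ 1 := by
    rw [show y i * K - a * (y j * K) - b * K = (y i - a * y j - b) * K by ring, abs_mul,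
      abs_of_pos hK]
    exact (mul_le_mul_of_nonneg_right hb hK.le).trans_eq (inv_mul_cancel₀ hK.ne')
  have hcell : |a * (y j * K - gridCoord u j)| ≤ 1 := by
    rw [abs_mul]
    exact mul_le_one₀ ha (abs_nonneg _) (abs_le.2 ⟨by linarith, by linarith⟩)
  have hslope : |(a * K - ⌊a * K⌋) * (gridCoord u j / K)| ≤ 1 := by
    rw [Int.self_sub_floor, abs_mul, abs_of_nonneg (Int.fract_nonneg _),
      abs_of_nonneg (by positivity)]
    exact mul_le_one₀ (Int.fract_lt_one _).le (by positivity) ((div_le_one hK).2 hlt)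
  have hsplit : (a * K - ⌊a * K⌋) * (gridCoord u j / K) =
      a * gridCoord u j - ⌊a * K⌋ / K * gridCoord u j := by
    field_simp
  rw [hsplit] at hslope
  rw [abs_le] at hscaled hcell hslope ⊢
  constructor <;> linarith [Int.floor_le (b * K), Int.lt_floor_add_one (b * K)]

lemma take_mem_strip_of_mem_wordCube [NeZero M] {w : List (Alpha 2 M)} {m : ℕ}
    (hm : m ≤ w.length) (ha : |a| ≤ 1) {y : EuclideanSpace ℝ (Fin 2)} (hy : y ∈ wordCube 2 M w)
    (hb : |skewProj i j a y - b| ≤ (M : ℝ)⁻¹ ^ m) :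
    w.take m ∈ strip M m i j (⌊a * (M : ℝ) ^ m⌋ / (M : ℝ) ^ m) ⌊b * (M : ℝ) ^ m⌋ := by
  have hlen : (w.take m).length = m := by simp [hm]
  have h := mem_strip_of_mem_wordCube ha (wordCube_subset_of_prefix (List.take_prefix m w) hy)
    (hlen.symm ▸ hb)
  rwa [hlen] at h

lemma floor_mem_stripIndices (hij : i ≠ j) (ha : |a| ≤ 1) (hb : |b| ≤ 3) (m : ℕ) :
    ((i, j), ⌊a * (M : ℝ) ^ m⌋, ⌊b * (M : ℝ) ^ m⌋) ∈ stripIndices M m := by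
  have hfloor {x c : ℝ} (N : ℕ) (hx : |x| ≤ c) (hc : c ≤ N) :
      ⌊x * (M : ℝ) ^ m⌋ ∈ Finset.Icc (-N * (M ^ m : ℤ)) (N * M ^ m) := by
    obtain ⟨hlo, hhi⟩ := abs_le.1 (hx.trans hc)
    rw [Finset.mem_Icc, Int.le_floor, ← Int.cast_le (R := ℝ)]
    push_cast
    exact ⟨by gcongr, (Int.floor_le _).trans (by gcongr)⟩
  simp only [stripIndices, Finset.mem_product, Finset.mem_offDiag, Finset.mem_univ, true_and]
  exact ⟨hij, by simpa using hfloor 1 ha (by simp), by simpa using hfloor 4 hb (by norm_num)⟩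

lemma abs_le_three_of_mem_wordCube [NeZero M] {w : List (Alpha 2 M)} (ha : |a| ≤ 1)
    {y : EuclideanSpace ℝ (Fin 2)} (hy : y ∈ wordCube 2 M w) (hb : |skewProj i j a y - b| ≤ 1) :
    |b| ≤ 3 := by
  have hyi := mem_Icc_of_mem_wordCube hy i
  have hyj := mem_Icc_of_mem_wordCube hy j
  have hay : |a * y j| ≤ 1 := by
    rw [abs_mul, abs_of_nonneg hyj.1]
    exact mul_le_one₀ ha hyj.1 hyj.2
  rw [skewProj, abs_le] at hb
  rw [abs_le] at hay ⊢
  constructor <;> linarith [hyi.1, hyi.2]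

lemma half_pow_le_sum_of_mem_goodEvent [NeZero M] {p θ : ℝ} {m₀ n : ℕ} {ω : PercSpace 2 M}
    (hp : 0 ≤ p) (hθ : 0 ≤ θ) (hω : ω ∈ goodEvent M p θ m₀ n) (hij : i ≠ j) (ha : |a| ≤ 1)
    {ι : Type*} (s : Finset ι) {x : ι → ℝ} {m : ι → ℕ} (hm : ∀ k ∈ s, m k ∈ Icc m₀ n)
    (hcov : skewProj i j a '' approx 2 M ω n ⊆
      ⋃ k ∈ s, Metric.ball (x k) ((M : ℝ)⁻¹ ^ m k)) :
    ((M : ℝ) ^ 2 * p) ^ n / 2 ≤ ∑ k ∈ s, 11 * (m k + 1) * (θ * max 1 (M * p)) ^ m k *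
      (θ ^ m k * ((M : ℝ) ^ 2 * p) ^ (n - m k)) := by
  classical
  obtain ⟨hmany, hω⟩ := hω
  simp only [mem_iUnion₂, not_exists, mem_union, not_or, Finset.mem_Icc] at hω
  set T : ι → Finset (List (Alpha 2 M)) := fun k =>
    indexedStrip M (m k) ((i, j), ⌊a * (M : ℝ) ^ m k⌋, ⌊x k * (M : ℝ) ^ m k⌋)
  set s' := s.filter fun k => |x k| ≤ 3
  have hs' {k} (hk : k ∈ s') : k ∈ s ∧ |x k| ≤ 3 := Finset.mem_filter.1 hk
  have hM : (M : ℝ)⁻¹ ≤ 1 := inv_le_one_of_one_le₀ (Nat.one_le_cast.2 (NeZero.pos M))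
  have hT (w : List (Alpha 2 M)) (hw : w.length = n) (hr : Retained 2 M ω w) :
      ∃ k ∈ s', ∃ u ∈ T k, u <+: w := by
    have hy := toLp_wordBase_mem_wordCube w
    obtain ⟨k, hk, hball⟩ := mem_iUnion₂.1 (hcov ⟨_, mem_approx.2 ⟨w, ⟨hw, hr⟩, hy⟩, rfl⟩)
    rw [Metric.mem_ball, Real.dist_eq] at hball
    refine ⟨k, Finset.mem_filter.2 ⟨hk, abs_le_three_of_mem_wordCube ha hy
      (hball.le.trans (pow_le_one₀ (by positivity) hM))⟩, w.take (m k),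
      take_mem_strip_of_mem_wordCube (hw ▸ (hm k hk).2) ha hy hball.le, List.take_prefix _ _⟩
  have hB (k) (hk : k ∈ s') (u) (hu : u ∈ T k) : (retainedCount (descendants u n) ω : ℝ) ≤
      θ ^ m k * ((M : ℝ) ^ 2 * p) ^ (n - m k) := by
    have hcube := (hω (m k) (hm k (hs' hk).1)).1
    simp only [crowdedCube, mem_ofPred_eq, not_exists, not_and, not_le] at hcube
    exact (hcube u (mem_wordsOfLength.2 (mem_strip.1 hu).1)).le
  have hTcount (k) (hk : k ∈ s') : (retainedCount (T k) ω : ℝ) ≤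
      11 * (m k + 1) * (θ * max 1 (M * p)) ^ m k := by
    have hstrip := (hω (m k) (hm k (hs' hk).1)).2
    simp only [crowdedStrip, mem_ofPred_eq, not_exists, not_and, not_le] at hstrip
    exact (hstrip _ (floor_mem_stripIndices hij ha (hs' hk).2 _)).le
  calc ((M : ℝ) ^ 2 * p) ^ n / 2 ≤ retainedCount (wordsOfLength 2 M n) ω := hmany
    _ ≤ ∑ k ∈ s', retainedCount (T k) ω * (θ ^ m k * ((M : ℝ) ^ 2 * p) ^ (n - m k)) :=
        retainedCount_wordsOfLength_le_sum s' hT hB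
    _ ≤ ∑ k ∈ s', 11 * (m k + 1) * (θ * max 1 (M * p)) ^ m k *
          (θ ^ m k * ((M : ℝ) ^ 2 * p) ^ (n - m k)) :=
        Finset.sum_le_sum fun k hk => mul_le_mul_of_nonneg_right (hTcount k hk) (by positivity)
    _ ≤ _ := Finset.sum_le_sum_of_subset_of_nonneg (Finset.filter_subset _ _)
        fun _ _ _ => by positivity

lemma inv_le_sum_pow_of_mem_goodEvent [NeZero M] {p θ Y C : ℝ} {m₀ n : ℕ} {ω : PercSpace 2 M}
    (hp : 0 < p) (hθ : 0 ≤ θ) (hC : 0 < C)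
    (hgrowth : ∀ m : ℕ, (m + 1) * (θ * max 1 (M * p)) ^ m * θ ^ m ≤ C * ((M : ℝ) ^ 2 * p * Y) ^ m)
    (hω : ω ∈ goodEvent M p θ m₀ n) (hij : i ≠ j) (ha : |a| ≤ 1)
    {ι : Type*} (s : Finset ι) {x : ι → ℝ} {m : ι → ℕ} (hm : ∀ k ∈ s, m k ∈ Icc m₀ n)
    (hcov : skewProj i j a '' approx 2 M ω n ⊆
      ⋃ k ∈ s, Metric.ball (x k) ((M : ℝ)⁻¹ ^ m k)) :
    (22 * C)⁻¹ ≤ ∑ k ∈ s, Y ^ m k := by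
  have hM : (0 : ℝ) < M := Nat.cast_pos.2 (NeZero.pos M)
  set b := (M : ℝ) ^ 2 * p
  have : 0 < b := by positivity
  have hterm (k) (hk : k ∈ s) : 11 * (m k + 1) * (θ * max 1 (M * p)) ^ m k *
      (θ ^ m k * b ^ (n - m k)) ≤ 11 * C * b ^ n * Y ^ m k := by
    calc _ = 11 * ((m k + 1) * (θ * max 1 (M * p)) ^ m k * θ ^ m k) * b ^ (n - m k) := by ring
      _ ≤ 11 * (C * (b * Y) ^ m k) * b ^ (n - m k) := by
        have := hgrowth (m k)
        gcongr
      _ = 11 * C * (b ^ m k * b ^ (n - m k)) * Y ^ m k := by ring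
      _ = 11 * C * b ^ n * Y ^ m k := by rw [← pow_add, Nat.add_sub_cancel' (hm k hk).2]
  have hsum := (half_pow_le_sum_of_mem_goodEvent hp.le hθ hω hij ha s hm hcov).trans
    (Finset.sum_le_sum hterm)
  rw [← Finset.mul_sum] at hsum
  rw [inv_le_iff_one_le_mul₀' (by positivity)]
  refine le_of_mul_le_mul_left (a := b ^ n / 2) ?_ (by positivity)
  linarith

/-- The event that all skew projections of the percolation set have dimension at least `t`. -/
def wideProjections (M : ℕ) (t : ℝ) : Set (PercSpace 2 M) :=
  {ω | ∀ i j : Fin 2, i ≠ j → ∀ a : ℝ, |a| ≤ 1 →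
    ENNReal.ofReal t ≤ dimH (skewProj i j a '' percLimit 2 M ω)}

lemma limsup_goodEvent_subset_wideProjections (hM : 1 < M) {p θ t C : ℝ} {m₀ : ℕ}
    (hp : 0 < p) (hθ : 0 ≤ θ) (ht : 0 < t) (hC : 0 < C)
    (hgrowth : ∀ m : ℕ, (m + 1) * (θ * max 1 (M * p)) ^ m * θ ^ m ≤
      C * ((M : ℝ) ^ 2 * p * (M : ℝ)⁻¹ ^ t) ^ m) :
    Filter.limsup (goodEvent M p θ m₀) Filter.atTop ⊆ wideProjections M t := by
  have : NeZero M := ⟨by omega⟩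
  intro ω hω i j hij a ha
  rw [Filter.mem_limsup_iff_frequently_mem] at hω
  rw [percLimit_eq_iInter]
  refine ofReal_le_dimH_image_iInter (antitone_approx ω) (isCompact_approx ω) continuous_skewProj
    m₀ ht (r := (M : ℝ)⁻¹) (c := (22 * C)⁻¹) (by positivity)
    (inv_lt_one_of_one_lt₀ (mod_cast hM)) (by positivity) ?_
  rintro s x m hm ⟨N, hN⟩
  obtain ⟨n, hn, hgood⟩ := Filter.frequently_atTop.1 hω (max N (s.sup m))
  refine inv_le_sum_pow_of_mem_goodEvent hp hθ hC hgrowth hgood hij ha s (fun k hk => ?_)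
    ((image_mono (antitone_approx ω (le_of_max_le_left hn))).trans hN)
  exact ⟨hm k, (Finset.le_sup hk).trans (le_of_max_le_right hn)⟩

end SkewProj

/-! ### Almost sure dimension bounds -/

section AlmostSure

open Filter Topology

variable {d M : ℕ}

lemma mem_wideProjections_of_subtreeLabels [NeZero M] {t : ℝ} {ω : PercSpace 2 M} {c : Alpha 2 M}
    (hc : ω ⟨[c], List.cons_ne_nil _ _⟩ = true) (h : subtreeLabels c ω ∈ wideProjections M t) :
    ω ∈ wideProjections M t := by
  intro i j hij a ha
  have hM : (M : ℝ) ≠ 0 := NeZero.ne _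
  have hlip : LipschitzWith M fun y : ℝ => M * y - ((c i : ℕ) - a * (c j : ℕ)) := by
    simpa using (lipschitzWith_smul (M : ℝ)).sub (LipschitzWith.const ((c i : ℕ) - a * (c j : ℕ)))
  refine (h i j hij a ha).trans <| (dimH_mono ?_).trans (hlip.dimH_image_le _)
  rintro _ ⟨x, hx, rfl⟩
  refine ⟨_, ⟨_, cubeMap_mem_percLimit hc hx, rfl⟩, ?_⟩
  simp only [skewProj, cubeMap]
  field_simp
  ring

lemma disjoint_wideProjections_extinction [NeZero M] {t : ℝ} (ht : 0 < t) :
    Disjoint (wideProjections M t) (extinction 2 M) := by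
  refine disjoint_left.2 fun ω hω hext => ?_
  have h := hω 0 1 zero_ne_one 0 (by simp)
  rw [percLimit_eq_empty_of_mem_extinction hext, image_empty, dimH_empty] at h
  exact (ENNReal.ofReal_pos.2 ht).not_ge h

lemma max_one_mul_lt_sq_mul_inv_rpow {M p t : ℝ} (hM : 1 < M) (hp : 0 < p) (ht : t < 1)
    (htb : M ^ t < M ^ 2 * p) : max 1 (M * p) < M ^ 2 * p * M⁻¹ ^ t := by
  have hM0 : 0 < M := one_pos.trans hM
  rw [Real.inv_rpow hM0.le, ← div_eq_mul_inv, lt_div_iff₀ (by positivity),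
    max_mul_of_nonneg _ _ (by positivity), one_mul]
  refine max_lt htb ?_
  calc M * p * M ^ t < M * p * M := by
        gcongr
        exact Real.rpow_lt_self_of_one_lt hM ht
    _ = M ^ 2 * p := by ring

lemma IsBernoulliPerc.ae_mem_wideProjections (hM : 1 < M) {p t : ℝ} {P : Measure (PercSpace 2 M)}
    (hP : IsBernoulliPerc 2 M p P) (hp : 0 < p) (ht0 : 0 < t) (ht1 : t < 1)
    (htb : (M : ℝ) ^ t < (M : ℝ) ^ 2 * p) :
    ∀ᵐ ω ∂P, (percLimit 2 M ω).Nonempty → ω ∈ wideProjections M t := by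
  have := hP.1
  have : NeZero M := ⟨by omega⟩
  have hM1 : (1 : ℝ) < M := mod_cast hM
  have hb : 1 < (M : ℝ) ^ 2 * p := (Real.one_lt_rpow hM1 ht0).trans htb
  obtain ⟨θ, C, hθ, hC, hgrowth⟩ := exists_forall_succ_mul_pow_mul_pow_le
    (lt_max_of_lt_left one_pos) (max_one_mul_lt_sq_mul_inv_rpow hM1 hp ht1 htb)
  obtain ⟨δ, m₀, hδ, hgood⟩ := hP.exists_forall_le_measure_goodEvent hp.le hP.prob_le_one hb hθ
  have hpos : P (limsup (goodEvent M p θ m₀) atTop) ≠ 0 :=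
    ((ENNReal.ofReal_pos.2 hδ).trans_le
      (le_measure_limsup_atTop (measurableSet_goodEvent m₀) hgood)).ne'
  have hae := hP.ae_mem_of_notMem_extinction hp (Nat.one_lt_pow two_ne_zero hM)
    (fun _ _ => mem_wideProjections_of_subtreeLabels) (disjoint_wideProjections_extinction ht0)
    (MeasurableSet.measurableSet_limsup (measurableSet_goodEvent m₀))
    (limsup_goodEvent_subset_wideProjections hM hp (zero_le_one.trans hθ.le) ht0 hC hgrowth) hpos
  filter_upwards [hae] with ω hω hne
  exact hω fun hext => hne.ne_empty (percLimit_eq_empty_of_mem_extinction hext)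

lemma hausdorffMeasure_percLimit_le_liminf (hM : 1 < M) {s : ℝ} (hs : 0 ≤ s) (ω : PercSpace d M) :
    μH[s] (percLimit d M ω) ≤ liminf (fun n => (retainedCount (wordsOfLength d M n) ω : ℝ≥0∞) *
      (ENNReal.ofReal (√d) * ENNReal.ofReal ((M : ℝ)⁻¹ ^ n)) ^ s) atTop := by
  classical
  have : NeZero M := ⟨by omega⟩
  set r : ℕ → ℝ≥0∞ := fun n => ENNReal.ofReal (√d) * ENNReal.ofReal ((M : ℝ)⁻¹ ^ n)
  have hr : Tendsto r atTop (𝓝 0) := by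
    simpa [r] using ENNReal.Tendsto.const_mul (ENNReal.tendsto_ofReal
      (tendsto_pow_atTop_nhds_zero_of_lt_one (by positivity)
        (inv_lt_one_of_one_lt₀ (Nat.one_lt_cast.2 hM)))) (Or.inr ENNReal.ofReal_ne_top)
  have hdiam (n : ℕ) (w : (wordsOfLength d M n).filter (Retained d M ω)) :
      Metric.ediam (wordCube d M w.1) ≤ r n := by
    simpa [r, mem_wordsOfLength.1 (Finset.mem_filter.1 w.2).1] using ediam_wordCube_le w.1
  refine (Measure.hausdorffMeasure_le_liminf_sum s _ r hr _ (.of_forall hdiam)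
    (.of_forall fun n x hx => ?_)).trans (liminf_le_liminf (.of_forall fun n => ?_))
  · rw [percLimit_eq_iInter, mem_iInter] at hx
    obtain ⟨w, ⟨hw, hret⟩, hxw⟩ := mem_approx.1 (hx n)
    exact mem_iUnion.2 ⟨⟨w, by simp [hw, hret]⟩, hxw⟩
  · refine (Finset.sum_le_card_nsmul _ _ _ fun w _ =>
      ENNReal.rpow_le_rpow (hdiam n w) hs).trans_eq ?_
    simp [retainedCount, r]

lemma IsBernoulliPerc.tendsto_lintegral_retainedCount_mul_rpow [NeZero M] {p s : ℝ}
    {P : Measure (PercSpace d M)} (hP : IsBernoulliPerc d M p P) (hp : 0 ≤ p) (hs : 0 ≤ s)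
    (hsb : (M : ℝ) ^ d * p < (M : ℝ) ^ s) :
    Tendsto (fun n => ∫⁻ ω, (retainedCount (wordsOfLength d M n) ω : ℝ≥0∞) *
      (ENNReal.ofReal (√d) * ENNReal.ofReal ((M : ℝ)⁻¹ ^ n)) ^ s ∂P) atTop (𝓝 0) := by
  have hM : (0 : ℝ) < M := Nat.cast_pos.2 (NeZero.pos M)
  set q := (M : ℝ) ^ d * p * (M : ℝ)⁻¹ ^ s with hq_def
  have hq : q < 1 := by
    rwa [hq_def, Real.inv_rpow hM.le, ← div_eq_mul_inv, div_lt_one (by positivity)]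
  have hexpect (n : ℕ) : ∫⁻ ω, (retainedCount (wordsOfLength d M n) ω : ℝ≥0∞) *
      (ENNReal.ofReal (√d) * ENNReal.ofReal ((M : ℝ)⁻¹ ^ n)) ^ s ∂P =
        ENNReal.ofReal (√d ^ s * q ^ n) := by
    rw [lintegral_mul_const _ (measurable_natCast_retainedCount _),
      hP.lintegral_retainedCount_wordsOfLength hp, ← ENNReal.ofReal_mul (by positivity),
      ENNReal.ofReal_rpow_of_nonneg (by positivity) hs, ← ENNReal.ofReal_mul (by positivity),
      Real.mul_rpow (by positivity) (by positivity), ← Real.rpow_natCast_mul (by positivity),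
      mul_comm (n : ℝ), Real.rpow_mul_natCast (by positivity)]
    congr 1
    ring
  simp only [hexpect]
  simpa using ENNReal.tendsto_ofReal
    ((tendsto_pow_atTop_nhds_zero_of_lt_one (by positivity) hq).const_mul (√d ^ s))

lemma IsBernoulliPerc.ae_dimH_percLimit_le (hM : 1 < M) {p s : ℝ} {P : Measure (PercSpace d M)}
    (hP : IsBernoulliPerc d M p P) (hp : 0 ≤ p) (hs : 0 ≤ s)
    (hsb : (M : ℝ) ^ d * p < (M : ℝ) ^ s) :
    ∀ᵐ ω ∂P, dimH (percLimit d M ω) ≤ ENNReal.ofReal s := by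
  have : NeZero M := ⟨by omega⟩
  set F : ℕ → PercSpace d M → ℝ≥0∞ := fun n ω =>
    (retainedCount (wordsOfLength d M n) ω : ℝ≥0∞) *
      (ENNReal.ofReal (√d) * ENNReal.ofReal ((M : ℝ)⁻¹ ^ n)) ^ s
  have hF (n) : Measurable (F n) := (measurable_natCast_retainedCount _).mul_const _
  have hfatou : ∫⁻ ω, liminf (fun n => F n ω) atTop ∂P = 0 := nonpos_iff_eq_zero.1 <|
    (lintegral_liminf_le hF).trans_eq
      (hP.tendsto_lintegral_retainedCount_mul_rpow hp hs hsb).liminf_eq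
  filter_upwards [(lintegral_eq_zero_iff (Measurable.liminf hF)).1 hfatou] with ω hω
  have hzero : μH[s] (percLimit d M ω) = 0 := nonpos_iff_eq_zero.1 <|
    (hausdorffMeasure_percLimit_le_liminf hM hs ω).trans_eq hω
  refine dimH_le_of_hausdorffMeasure_ne_top (d := s.toNNReal) ?_
  rw [Real.coe_toNNReal s hs, hzero]
  exact zero_ne_top

end AlmostSure

/-! ### Projections onto lines -/

section Lines

local notation "ℝ²" => EuclideanSpace ℝ (Fin 2)

lemma dimH_lineProj_image_le (z v : ℝ²) (s : Set ℝ²) :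
    dimH (lineProj z v '' s) ≤ min 1 (dimH s) := by
  have hcoord : ContDiff ℝ 1 fun x : ℝ² => inner ℝ (x - z) v / inner ℝ v v :=
    ((contDiff_id.sub contDiff_const).inner ℝ contDiff_const).div_const _
  have hline : ContDiff ℝ 1 fun r : ℝ => z + r • v :=
    contDiff_const.add (contDiff_id.smul contDiff_const)
  have himage : lineProj z v '' s =
      (fun r : ℝ => z + r • v) '' ((fun x => inner ℝ (x - z) v / inner ℝ v v) '' s) := by
    rw [image_image]
    rfl
  have hle (u : Set ℝ) : dimH ((fun r : ℝ => z + r • v) '' u) ≤ dimH u :=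
    hline.contDiffOn.dimH_image_le convex_univ (subset_univ _)
  rw [himage]
  refine (hle _).trans (le_min ?_ ?_)
  · exact (dimH_mono (subset_univ _)).trans_eq Real.dimH_univ
  · exact hcoord.contDiffOn.dimH_image_le convex_univ (subset_univ _)

/- Up to a scalar, the coordinate along `v` is the skew projection of slope `-(v j / v i)`, where
`v i` is the larger coordinate of `v`. -/
lemma exists_dimH_skewProj_image_le_dimH_lineProj_image (z : ℝ²) {v : ℝ²} (hv : v ≠ 0) :
    ∃ i j : Fin 2, i ≠ j ∧ ∃ a : ℝ, |a| ≤ 1 ∧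
      ∀ s : Set ℝ², dimH (skewProj i j a '' s) ≤ dimH (lineProj z v '' s) := by
  obtain ⟨i, j, hij, hle, hsum⟩ : ∃ i j : Fin 2, i ≠ j ∧ |v j| ≤ |v i| ∧
      ∀ x : ℝ², inner ℝ x v = x i * v i + x j * v j := by
    rcases le_total |v 1| |v 0| with h | h
    · refine ⟨0, 1, by simp, h, fun x => ?_⟩
      simp [PiLp.inner_apply, mul_comm]
    · refine ⟨1, 0, by simp, h, fun x => ?_⟩
      simp [PiLp.inner_apply, mul_comm, add_comm]
  have hvv : inner ℝ v v ≠ 0 := inner_self_ne_zero.2 hv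
  have hvi : v i ≠ 0 := by
    intro h0
    have hj : v j = 0 := by simpa [h0] using hle
    exact hvv (by rw [hsum, h0, hj, mul_zero, add_zero])
  refine ⟨i, j, hij, -(v j / v i), ?_, fun s => ?_⟩
  · rw [abs_neg, abs_div]
    exact div_le_one_of_le₀ hle (abs_nonneg _)
  have hcoord : ContDiff ℝ 1 fun y : ℝ² => inner ℝ y v / v i :=
    (contDiff_id.inner ℝ contDiff_const).div_const _
  refine (dimH_mono ?_).trans
    (hcoord.contDiffOn.dimH_image_le convex_univ (subset_univ (lineProj z v '' s)))
  rintro _ ⟨x, hx, rfl⟩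
  refine ⟨lineProj z v x, mem_image_of_mem _ hx, ?_⟩
  have hinner : inner ℝ (lineProj z v x) v = inner ℝ x v := by
    rw [lineProj, inner_add_left, real_inner_smul_left, div_mul_cancel₀ _ hvv, inner_sub_left,
      add_sub_cancel]
  simp only [hinner, hsum, skewProj]
  field_simp
  ring

lemma le_dimH_lineProj_image_of_mem_wideProjections {M : ℕ} {t : ℝ} {ω : PercSpace 2 M}
    (h : ω ∈ wideProjections M t) (z : ℝ²) {v : ℝ²} (hv : v ≠ 0) :
    ENNReal.ofReal t ≤ dimH (lineProj z v '' percLimit 2 M ω) := by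
  obtain ⟨i, j, hij, a, ha, hle⟩ := exists_dimH_skewProj_image_le_dimH_lineProj_image z hv
  exact (h i j hij a ha).trans (hle _)

lemma exists_rat_ofReal_btwn {x y : ℝ≥0∞} (h : x < y) :
    ∃ q : ℚ, 0 ≤ (q : ℝ) ∧ x < ENNReal.ofReal q ∧ ENNReal.ofReal q < y := by
  obtain ⟨q, hq, hx, hy⟩ := ENNReal.lt_iff_exists_rat_btwn.1 h
  exact ⟨q, mod_cast hq, hx, hy⟩

variable {M : ℕ} {p : ℝ} {P : Measure (PercSpace 2 M)}

lemma IsBernoulliPerc.ae_forall_rat_mem_wideProjections (hM : 1 < M) (hP : IsBernoulliPerc 2 M p P)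
    (hp : 0 < p) : ∀ᵐ ω ∂P, ∀ t : ℚ, 0 < (t : ℝ) → (t : ℝ) < 1 →
      (M : ℝ) ^ (t : ℝ) < (M : ℝ) ^ 2 * p → (percLimit 2 M ω).Nonempty →
        ω ∈ wideProjections M t := by
  simp only [ae_all_iff, Filter.eventually_imp_distrib_left]
  exact fun t ht0 ht1 htb => hP.ae_mem_wideProjections hM hp ht0 ht1 htb

lemma IsBernoulliPerc.ae_forall_rat_dimH_percLimit_le (hM : 1 < M) (hP : IsBernoulliPerc 2 M p P)
    (hp : 0 ≤ p) : ∀ᵐ ω ∂P, ∀ s : ℚ, 0 ≤ (s : ℝ) →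
      (M : ℝ) ^ 2 * p < (M : ℝ) ^ (s : ℝ) → dimH (percLimit 2 M ω) ≤ ENNReal.ofReal s := by
  simp only [ae_all_iff, Filter.eventually_imp_distrib_left]
  exact fun s hs hsb => hP.ae_dimH_percLimit_le hM hp hs hsb

lemma IsBernoulliPerc.ae_min_one_dimH_percLimit_le (hM : 1 < M) (hP : IsBernoulliPerc 2 M p P)
    (hp : 0 < p) : ∀ᵐ ω ∂P, ∀ z v : ℝ², v ≠ 0 →
      min 1 (dimH (percLimit 2 M ω)) ≤ dimH (lineProj z v '' percLimit 2 M ω) := by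
  filter_upwards [hP.ae_forall_rat_mem_wideProjections hM hp,
    hP.ae_forall_rat_dimH_percLimit_le hM hp.le] with ω hwide hdim z v hv
  by_contra! hlt
  obtain ⟨t, ht0, hproj, htmin⟩ := exists_rat_ofReal_btwn hlt
  obtain ⟨s, hs0, hts, hsmin⟩ := exists_rat_ofReal_btwn htmin
  have hts : (t : ℝ) < s := (ENNReal.ofReal_lt_ofReal_iff_of_nonneg ht0).1 hts
  have hs1 : (s : ℝ) < 1 := ENNReal.ofReal_lt_one.1 (hsmin.trans_le (min_le_left _ _))
  have hsdim : ENNReal.ofReal s < dimH (percLimit 2 M ω) := hsmin.trans_le (min_le_right _ _)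
  rcases lt_or_ge ((M : ℝ) ^ (t : ℝ)) ((M : ℝ) ^ 2 * p) with htb | htb
  · have htpos : 0 < (t : ℝ) := ENNReal.ofReal_pos.1 (pos_of_gt hproj)
    have hne : (percLimit 2 M ω).Nonempty := by
      refine nonempty_iff_ne_empty.2 fun hempty => ?_
      simp [hempty] at hsdim
    exact hproj.not_ge (le_dimH_lineProj_image_of_mem_wideProjections
      (hwide t htpos (hts.trans hs1) htb hne) z hv)
  · have hsb : (M : ℝ) ^ 2 * p < (M : ℝ) ^ (s : ℝ) :=
      htb.trans_lt (Real.rpow_lt_rpow_of_exponent_lt (Nat.one_lt_cast.2 hM) hts)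
    exact hsdim.not_ge (hdim s hs0 hsb)

end Lines

/-- conditioned on `E ≠ ∅`, almost surely for ALL lines `ℓ`
(including the axis-parallel ones), `dim_H (proj_ℓ E) = min 1 (dim_H E)`. -/
theorem projection_dimension_all_lines
    (M : ℕ) (hM : 2 ≤ M) (p : ℝ) (hp0 : 0 < p) (hp1 : p ≤ 1)
    (P : Measure (PercSpace 2 M)) (hP : IsBernoulliPerc 2 M p P) :
    ∀ᵐ ω ∂(ProbabilityTheory.cond P {ω | percLimit 2 M ω ≠ ∅}),
      ∀ z v : EuclideanSpace ℝ (Fin 2), v ≠ 0 →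
        dimH (lineProj z v '' percLimit 2 M ω) = min 1 (dimH (percLimit 2 M ω)) := by
  filter_upwards [cond_absolutelyContinuous.ae_le (hP.ae_min_one_dimH_percLimit_le hM hp0)]
    with ω hω z v hv
  exact le_antisymm (dimH_lineProj_image_le z v _) (hω z v hv)
end
end

section
/- Let n ≥ 1, let 𝒞 be an arbitrary collection of level-n M-adic squares in [0,1]² and let F be the union of the squares in 𝒞. Let ℓ be a segment cut out of [0,1]² by a line that is neither horizontal nor vertical, and let ℓ^u, ℓ^l be segments cut out of [0,1]² by two lines parallel to ℓ, lying on opposite sides of ℓ, each at distance from ℓ strictly between M^{-n}/(2√2) and M^{-n}/√2. Then the number of squares K ∈ 𝒞 whose interior meets ℓ is at most 2 M^n (𝓛eb₁(F ∩ ℓ) + 𝓛eb₁(F ∩ ℓ^u) + 𝓛eb₁(F ∩ ℓ^l)), where 𝓛eb₁ denotes one-dimensional Lebesgue measure (length) on the respective line. -/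
open MeasureTheory Set ENNReal ProbabilityTheory Real

noncomputable section

/-- The segment cut out of `[0,1]²` by the line through `z` with direction `v`. -/
def lineSeg (z v : EuclideanSpace ℝ (Fin 2)) : Set (EuclideanSpace ℝ (Fin 2)) :=
  {x | (∃ t : ℝ, x = z + t • v) ∧ ∀ i, 0 ≤ x i ∧ x i ≤ 1}

/-- The line through `z` with direction `v` meets the open unit square. -/
def MeetsOpenSquare (z v : EuclideanSpace ℝ (Fin 2)) : Prop :=
  ∃ t : ℝ, ∀ i, 0 < (z + t • v) i ∧ (z + t • v) i < 1

/-- The line with direction `v` makes an acute angle `> θ` with both coordinate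
axes (the angle with the `x`-axis has sine `|v 1|/‖v‖`, the one with the
`y`-axis has sine `|v 0|/‖v‖`). -/
def AngleSep (θ : ℝ) (v : EuclideanSpace ℝ (Fin 2)) : Prop :=
  Real.sin θ * ‖v‖ < |v 1| ∧ Real.sin θ * ‖v‖ < |v 0|

/-- The closed level-`n` `M`-adic cube of `[0,1]^d` with lower corner `(k i * M⁻ⁿ)ᵢ`. -/
def adicCube (d M n : ℕ) (k : Fin d → ℕ) : Set (EuclideanSpace ℝ (Fin d)) :=
  {x | ∀ i, (k i : ℝ) * (M : ℝ) ^ (-(n : ℤ)) ≤ x i ∧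
      x i ≤ ((k i : ℝ) + 1) * (M : ℝ) ^ (-(n : ℤ))}

/-- The vector `(x, y)` of the Euclidean plane. -/
def vec2 (x y : ℝ) : EuclideanSpace ℝ (Fin 2) :=
  (WithLp.equiv 2 (Fin 2 → ℝ)).symm ![x, y]

/-!
Let `h = M⁻ⁿ / 2` and let `u = (a, b)` be the unit direction of `ℓ`. A line in direction `u` at
signed distance `δ` from the centre of a square of half-side `h` meets the square iff
`|δ| ≤ h (|a| + |b|)`, and it cuts out a chord of length at least `h` as soon as
`|δ| < W = h (|a| + |b| - |a| |b|)`. The two thresholds differ by `h |a| |b| ≤ h / 2`, whereas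
`2 W ≥ (2 √2 - 1) h`. So if `ℓ` meets the square but its own chord may be shorter than `h`, moving
`ℓ` towards the centre by an amount between these two numbers gives a chord of length at least `h`.
Each counted square therefore contributes at least `h` to the three slices together, and these
contributions add up because the interiors of the squares are disjoint.
-/

section AdicCube

variable {d M n : ℕ} {k : Fin d → ℕ}

/-- The centre of the `M`-adic cube `adicCube d M n k`. -/
def adicCenter (d M n : ℕ) (k : Fin d → ℕ) : EuclideanSpace ℝ (Fin d) :=
  WithLp.toLp 2 fun i => ((k i : ℝ) + 1 / 2) * (M : ℝ) ^ (-(n : ℤ))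

lemma adicCube_eq_preimage_pi :
    adicCube d M n k = EuclideanSpace.equiv (Fin d) ℝ ⁻¹' univ.pi fun i =>
      Icc ((k i : ℝ) * (M : ℝ) ^ (-(n : ℤ))) (((k i : ℝ) + 1) * (M : ℝ) ^ (-(n : ℤ))) := by
  ext x
  simp only [adicCube, mem_preimage, mem_univ_pi, mem_Icc]
  rfl

lemma isClosed_adicCube : IsClosed (adicCube d M n k) := by
  rw [adicCube_eq_preimage_pi]
  exact (isClosed_set_pi fun _ _ => isClosed_Icc).preimage (EuclideanSpace.equiv _ _).continuous

lemma convex_adicCube : Convex ℝ (adicCube d M n k) := by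
  rw [adicCube_eq_preimage_pi]
  exact (convex_pi fun _ _ => convex_Icc _ _).linear_preimage
    (EuclideanSpace.equiv (Fin d) ℝ).toLinearMap

lemma mem_interior_adicCube {x : EuclideanSpace ℝ (Fin d)} :
    x ∈ interior (adicCube d M n k) ↔ ∀ i, (k i : ℝ) * (M : ℝ) ^ (-(n : ℤ)) < x i ∧
      x i < ((k i : ℝ) + 1) * (M : ℝ) ^ (-(n : ℤ)) := by
  let e := EuclideanSpace.equiv (Fin d) ℝ
  rw [adicCube_eq_preimage_pi, ← e.isOpenMap.preimage_interior_eq_interior_preimage e.continuous,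
    interior_pi_set finite_univ]
  simp only [interior_Icc, mem_preimage, mem_univ_pi, mem_Ioo]
  rfl

lemma mem_adicCube_iff_abs_sub_adicCenter_le {x : EuclideanSpace ℝ (Fin d)} :
    x ∈ adicCube d M n k ↔
      ∀ i, |x i - adicCenter d M n k i| ≤ (M : ℝ) ^ (-(n : ℤ)) / 2 := by
  refine forall_congr' fun i => ?_
  rw [abs_le, adicCenter]
  constructor <;> rintro ⟨_, _⟩ <;> constructor <;> linarith

lemma mem_interior_adicCube_iff_abs_sub_adicCenter_lt {x : EuclideanSpace ℝ (Fin d)} :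
    x ∈ interior (adicCube d M n k) ↔
      ∀ i, |x i - adicCenter d M n k i| < (M : ℝ) ^ (-(n : ℤ)) / 2 := by
  rw [mem_interior_adicCube]
  refine forall_congr' fun i => ?_
  rw [abs_lt, adicCenter]
  constructor <;> rintro ⟨_, _⟩ <;> constructor <;> linarith

lemma pairwise_disjoint_interior_adicCube :
    Pairwise (Function.onFun Disjoint fun k => interior (adicCube d M n k)) := by
  refine fun k k' hne => Set.disjoint_left.2 fun x hx hx' => hne (funext fun i => ?_)
  rw [mem_interior_adicCube] at hx hx'
  have hside : (0 : ℝ) ≤ (M : ℝ) ^ (-(n : ℤ)) := by positivity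
  have hle : (k i : ℝ) < k' i + 1 :=
    lt_of_mul_lt_mul_right ((hx i).1.trans (hx' i).2) hside
  have hge : (k' i : ℝ) < k i + 1 :=
    lt_of_mul_lt_mul_right ((hx' i).1.trans (hx i).2) hside
  norm_cast at hle hge
  lia

lemma mem_Icc_of_mem_adicCube (hM : M ≠ 0) (hk : ∀ i, k i < M ^ n)
    {x : EuclideanSpace ℝ (Fin d)} (hx : x ∈ adicCube d M n k) (i : Fin d) :
    x i ∈ Icc (0 : ℝ) 1 := by
  refine ⟨le_trans (by positivity) (hx i).1, (hx i).2.trans ?_⟩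
  have hpos : (0 : ℝ) < (M : ℝ) ^ n := by positivity
  have hk' : (k i : ℝ) + 1 ≤ (M : ℝ) ^ n := by exact_mod_cast hk i
  rw [zpow_neg, zpow_natCast, ← div_eq_mul_inv]
  exact (div_le_one hpos).2 hk'

lemma measurableSet_biUnion_adicCube (𝒞 : Set (Fin d → ℕ)) :
    MeasurableSet (⋃ k ∈ 𝒞, adicCube d M n k) :=
  .biUnion 𝒞.to_countable fun _ _ => isClosed_adicCube.measurableSet

lemma card_mul_le_measure_biUnion_adicCube (μ : Measure (EuclideanSpace ℝ (Fin d)))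
    {S : Finset (Fin d → ℕ)} {𝒞 : Set (Fin d → ℕ)} (hS : ∀ k ∈ S, k ∈ 𝒞) {ε : ℝ≥0∞}
    (hε : ∀ k ∈ S, ε ≤ μ (interior (adicCube d M n k))) :
    S.card * ε ≤ μ (⋃ k ∈ 𝒞, adicCube d M n k) :=
  calc S.card * ε ≤ ∑ k ∈ S, μ (interior (adicCube d M n k)) := by
        simpa only [nsmul_eq_mul] using Finset.card_nsmul_le_sum S _ ε hε
    _ = μ (⋃ k ∈ S, interior (adicCube d M n k)) :=
        (measure_biUnion_finset (pairwise_disjoint_interior_adicCube.set_pairwise _)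
          fun _ _ => isOpen_interior.measurableSet).symm
    _ ≤ μ (⋃ k ∈ 𝒞, adicCube d M n k) :=
        measure_mono (biUnion_mono hS fun _ _ => interior_subset)

lemma finite_of_forall_lt_pow {𝒞 : Set (Fin d → ℕ)} (h𝒞 : ∀ k ∈ 𝒞, ∀ i, k i < M ^ n) :
    𝒞.Finite :=
  (Finite.pi' fun _ : Fin d => finite_Iio (M ^ n)).subset h𝒞

lemma ncard_interior_adicCube_inter_le {𝒞 : Set (Fin d → ℕ)} (h𝒞 : 𝒞.Finite)
    (L : Set (EuclideanSpace ℝ (Fin d))) :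
    {k ∈ 𝒞 | (interior (adicCube d M n k) ∩ L).Nonempty}.ncard ≤
      {k ∈ 𝒞 | (adicCube d M n k ∩ L).Nonempty}.ncard :=
  ncard_le_ncard
    (fun _ hk => ⟨hk.1, hk.2.mono (inter_subset_inter_left _ interior_subset)⟩)
    (h𝒞.subset (sep_subset _ _))

end AdicCube

lemma two_mul_pow_mul_ofReal_half_side {M : ℕ} (hM : M ≠ 0) (n : ℕ) :
    2 * (M : ℝ≥0∞) ^ n * ENNReal.ofReal ((M : ℝ) ^ (-(n : ℤ)) / 2) = 1 := by
  have hcast : 2 * (M : ℝ≥0∞) ^ n = ENNReal.ofReal (2 * (M : ℝ) ^ n) := by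
    simp [ENNReal.ofReal_mul, ENNReal.ofReal_pow]
  rw [hcast, ← ENNReal.ofReal_mul (by positivity), ← ENNReal.ofReal_one, zpow_neg, zpow_natCast]
  congr 1
  field_simp

section SignedHeight

variable {u z x : EuclideanSpace ℝ (Fin 2)}

/-- The component of `x` along `(-u 1, u 0)`. For a unit vector `u` this is the signed distance
from `x` to the line through the origin with direction `u`, so that the lines with direction `u`
are its level sets. -/
def signedHeight (u : EuclideanSpace ℝ (Fin 2)) : EuclideanSpace ℝ (Fin 2) →L[ℝ] ℝ :=
  innerSL ℝ (vec2 (-(u 1)) (u 0))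

lemma signedHeight_apply (u x : EuclideanSpace ℝ (Fin 2)) :
    signedHeight u x = u 0 * x 1 - u 1 * x 0 := by
  simp [signedHeight, vec2, PiLp.inner_apply, Fin.sum_univ_two]
  ring

lemma sq_add_sq_eq_one_of_norm_eq_one (hu : ‖u‖ = 1) : u 0 ^ 2 + u 1 ^ 2 = 1 := by
  simpa [hu, Fin.sum_univ_two] using (EuclideanSpace.real_norm_sq_eq u).symm

lemma signedHeight_self (u : EuclideanSpace ℝ (Fin 2)) : signedHeight u u = 0 := by
  rw [signedHeight_apply]
  ring

lemma signedHeight_add_smul_normal (hu : ‖u‖ = 1) (z : EuclideanSpace ℝ (Fin 2)) (c : ℝ) :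
    signedHeight u (z + c • vec2 (-(u 1)) (u 0)) = signedHeight u z + c := by
  have hnormal : signedHeight u (vec2 (-(u 1)) (u 0)) = 1 := by
    rw [signedHeight_apply, ← sq_add_sq_eq_one_of_norm_eq_one hu]
    simp only [vec2, WithLp.equiv_symm_apply, Matrix.cons_val_zero, Matrix.cons_val_one]
    ring
  rw [map_add, map_smul, hnormal, smul_eq_mul, mul_one]

lemma mem_lineSeg_iff_signedHeight_eq (hu : ‖u‖ = 1) :
    x ∈ lineSeg z u ↔ signedHeight u x = signedHeight u z ∧ ∀ i, 0 ≤ x i ∧ x i ≤ 1 := by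
  refine and_congr_left fun _ => ⟨?_, fun hx => ?_⟩
  · rintro ⟨t, rfl⟩
    rw [map_add, map_smul, signedHeight_self, smul_zero, add_zero]
  · have hsq := sq_add_sq_eq_one_of_norm_eq_one hu
    rw [signedHeight_apply, signedHeight_apply] at hx
    refine ⟨u 0 * (x 0 - z 0) + u 1 * (x 1 - z 1), PiLp.ext (Fin.forall_fin_two.2 ⟨?_, ?_⟩)⟩ <;>
      rw [PiLp.add_apply, PiLp.smul_apply, smul_eq_mul]
    · linear_combination -(x 0 - z 0) * hsq - u 1 * hx
    · linear_combination -(x 1 - z 1) * hsq + u 0 * hx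

lemma lineSeg_smul {r : ℝ} (hr : r ≠ 0) (z v : EuclideanSpace ℝ (Fin 2)) :
    lineSeg z (r • v) = lineSeg z v := by
  ext x
  refine and_congr_left fun _ => ⟨fun ⟨t, ht⟩ => ⟨t * r, ?_⟩, fun ⟨t, ht⟩ => ⟨t * r⁻¹, ?_⟩⟩
  · rw [ht, smul_smul]
  · rw [ht, smul_smul, inv_mul_cancel_right₀ hr]

end SignedHeight

section Chord

variable {M n : ℕ} {k : Fin 2 → ℕ} {u : EuclideanSpace ℝ (Fin 2)} {h r : ℝ}

lemma abs_signedHeight_sub_le {p q : EuclideanSpace ℝ (Fin 2)} (hp : ∀ i, |p i - q i| ≤ h) :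
    |signedHeight u p - signedHeight u q| ≤ h * (|u 0| + |u 1|) := by
  rw [← map_sub, signedHeight_apply, PiLp.sub_apply, PiLp.sub_apply]
  calc |u 0 * (p 1 - q 1) - u 1 * (p 0 - q 0)|
      ≤ |u 0| * |p 1 - q 1| + |u 1| * |p 0 - q 0| := by
        simpa only [abs_mul] using abs_sub (u 0 * (p 1 - q 1)) (u 1 * (p 0 - q 0))
    _ ≤ |u 0| * h + |u 1| * h := by gcongr <;> apply hp
    _ = h * (|u 0| + |u 1|) := by ring

/- The admissible midpoints `p` fill an open rectangle around `q`, and along one of its diagonals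
their height over `q` takes all values in `(-W, W)`, where `W` is the bound in the hypothesis. -/
lemma exists_chord_midpoint (hu : ‖u‖ = 1) (hh : 0 < h) (q : EuclideanSpace ℝ (Fin 2))
    (hr : |r - signedHeight u q| < h * (|u 0| + |u 1| - |u 0| * |u 1|)) :
    ∃ p, signedHeight u p = r ∧ ∀ i, |p i - q i| < h - h / 2 * |u i| := by
  set W := h * (|u 0| + |u 1| - |u 0| * |u 1|) with hW
  have hW_pos : 0 < W := (abs_nonneg _).trans_lt hr
  set t := (r - signedHeight u q) / W with ht
  have ht_lt : |t| < 1 := by rwa [ht, abs_div, abs_of_pos hW_pos, div_lt_one hW_pos]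
  have hside : ∀ i, 0 < h - h / 2 * |u i| := fun i => by
    have : |u i| ≤ 1 := hu ▸ PiLp.norm_apply_le u i
    nlinarith
  have hcoord : ∀ (σ : SignType) (i : Fin 2),
      |(σ : ℝ) * ((h - h / 2 * |u i|) * t)| < h - h / 2 * |u i| := fun σ i => by
    have hσ : |(σ : ℝ)| ≤ 1 := by cases σ <;> simp
    calc |(σ : ℝ) * ((h - h / 2 * |u i|) * t)|
        = |(σ : ℝ)| * ((h - h / 2 * |u i|) * |t|) := by
          rw [abs_mul, abs_mul, abs_of_pos (hside i)]
      _ ≤ (h - h / 2 * |u i|) * |t| :=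
          mul_le_of_le_one_left (mul_nonneg (hside i).le (abs_nonneg t)) hσ
      _ < h - h / 2 * |u i| := mul_lt_of_lt_one_right (hside i) ht_lt
  refine ⟨q + vec2 (-(SignType.sign (u 1) * ((h - h / 2 * |u 0|) * t)))
    (SignType.sign (u 0) * ((h - h / 2 * |u 1|) * t)), ?_, ?_⟩
  · rw [map_add, signedHeight_apply u (vec2 _ _)]
    simp only [vec2, WithLp.equiv_symm_apply, Matrix.cons_val_zero, Matrix.cons_val_one]
    have htW : t * W = r - signedHeight u q := div_mul_cancel₀ _ hW_pos.ne'
    linear_combination htW + (h - h / 2 * |u 1|) * t * self_mul_sign (u 0)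
      + (h - h / 2 * |u 0|) * t * self_mul_sign (u 1) - t * hW
  · simpa [Fin.forall_fin_two, vec2] using
      And.intro (hcoord (SignType.sign (u 1)) 0) (hcoord (SignType.sign (u 0)) 1)

lemma hausdorffMeasure_segment_sub_add (hu : ‖u‖ = 1) (hh : 0 ≤ h)
    (p : EuclideanSpace ℝ (Fin 2)) :
    μH[1] (segment ℝ (p - (h / 2) • u) (p + (h / 2) • u)) = ENNReal.ofReal h := by
  have hdiff : p - (h / 2) • u - (p + (h / 2) • u) = (-h) • u := by module
  rw [hausdorffMeasure_segment, edist_dist, dist_eq_norm, hdiff, norm_smul, hu, mul_one, norm_neg,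
    Real.norm_of_nonneg hh]

lemma le_hausdorffMeasure_interior_adicCube_inter (hu : ‖u‖ = 1) (hM : M ≠ 0)
    (hr : |r - signedHeight u (adicCenter 2 M n k)| <
      (M : ℝ) ^ (-(n : ℤ)) / 2 * (|u 0| + |u 1| - |u 0| * |u 1|)) :
    ENNReal.ofReal ((M : ℝ) ^ (-(n : ℤ)) / 2) ≤
      μH[1] (interior (adicCube 2 M n k) ∩ {x | signedHeight u x = r}) := by
  have hh : 0 < (M : ℝ) ^ (-(n : ℤ)) / 2 := by positivity
  set h := (M : ℝ) ^ (-(n : ℤ)) / 2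
  obtain ⟨p, hp, hpq⟩ := exists_chord_midpoint hu hh _ hr
  have hmem : ∀ s : ℝ, |s| = h / 2 →
      p + s • u ∈ interior (adicCube 2 M n k) ∩ {x | signedHeight u x = r} := fun s hs => by
    refine ⟨mem_interior_adicCube_iff_abs_sub_adicCenter_lt.2 fun i => ?_, ?_⟩
    · calc |(p + s • u) i - adicCenter 2 M n k i|
          = |(p i - adicCenter 2 M n k i) + s * u i| := by
            rw [PiLp.add_apply, PiLp.smul_apply, smul_eq_mul, add_sub_right_comm]
        _ ≤ |p i - adicCenter 2 M n k i| + h / 2 * |u i| := by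
            rw [← hs, ← abs_mul]; exact abs_add_le _ _
        _ < h := by linarith [hpq i]
    · rw [mem_ofPred_eq, map_add, map_smul, signedHeight_self, smul_zero, add_zero, hp]
  have hconvex : Convex ℝ (interior (adicCube 2 M n k) ∩ {x | signedHeight u x = r}) :=
    convex_adicCube.interior.inter (convex_hyperplane (signedHeight u).isLinear r)
  rw [← hausdorffMeasure_segment_sub_add hu hh.le p]
  refine measure_mono (hconvex.segment_subset ?_ (hmem _ (abs_of_pos (half_pos hh))))
  rw [sub_eq_add_neg, ← neg_smul]
  exact hmem _ (by rw [abs_neg, abs_of_pos (half_pos hh)])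

lemma interior_adicCube_inter_lineSeg (hu : ‖u‖ = 1) (hM : M ≠ 0) (hk : ∀ i, k i < M ^ n)
    (z : EuclideanSpace ℝ (Fin 2)) :
    interior (adicCube 2 M n k) ∩ lineSeg z u =
      interior (adicCube 2 M n k) ∩ {x | signedHeight u x = signedHeight u z} := by
  ext x
  refine and_congr_right fun hx => (mem_lineSeg_iff_signedHeight_eq hu).trans ?_
  exact and_iff_left (mem_Icc_of_mem_adicCube hM hk (interior_subset hx))

end Chord

section ThreeSlices

variable {M n : ℕ} {cu cl : ℝ}

lemma abs_lt_or_abs_add_lt_or_abs_add_lt {δ W e : ℝ} (hδ : |δ| ≤ W + e)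
    (hcu : cu ∈ Ioo e (2 * W)) (hcl : -cl ∈ Ioo e (2 * W)) :
    |δ| < W ∨ |δ + cu| < W ∨ |δ + cl| < W := by
  obtain ⟨hδ_ge, hδ_le⟩ := abs_le.1 hδ
  obtain ⟨hcu_gt, hcu_lt⟩ := hcu
  obtain ⟨hcl_gt, hcl_lt⟩ := hcl
  rcases lt_or_ge δ W with hlt | hge
  · rcases lt_or_ge (-W) δ with hgt | hle
    · exact .inl (abs_lt.2 ⟨hgt, hlt⟩)
    · exact .inr (.inl (abs_lt.2 ⟨by linarith, by linarith⟩))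
  · exact .inr (.inr (abs_lt.2 ⟨by linarith, by linarith⟩))

lemma mul_le_half_of_sq_add_sq_eq_one {a b : ℝ} (hab : a ^ 2 + b ^ 2 = 1) : a * b ≤ 1 / 2 := by
  linarith [two_mul_le_add_sq a b]

lemma sqrt_two_sub_half_le_add_sub_mul {a b : ℝ} (ha : 0 ≤ a) (hb : 0 ≤ b)
    (hab : a ^ 2 + b ^ 2 = 1) : √2 - 1 / 2 ≤ a + b - a * b := by
  have hsum_le : a + b ≤ √2 :=
    Real.le_sqrt_of_sq_le (by linarith [mul_le_half_of_sq_add_sq_eq_one hab])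
  have hsum_ge : 1 ≤ a + b := by nlinarith [mul_nonneg ha hb]
  have hsqrt : √2 ^ 2 = 2 := Real.sq_sqrt zero_le_two
  nlinarith [mul_nonneg (sub_nonneg.2 hsum_le) (show 0 ≤ a + b + √2 - 2 by linarith)]

lemma Ioo_quarter_subset_Ioo_of_sq_add_sq_eq_one {a b s : ℝ} (ha : 0 ≤ a) (hb : 0 ≤ b)
    (hab : a ^ 2 + b ^ 2 = 1) (hs : 0 ≤ s) :
    Ioo (s / 4) ((√2 - 1 / 2) * s) ⊆
      Ioo (s / 2 * (a * b)) (2 * (s / 2 * (a + b - a * b))) := by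
  refine Ioo_subset_Ioo ?_ ?_
  · linarith [mul_le_mul_of_nonneg_left (mul_le_half_of_sq_add_sq_eq_one hab) hs]
  · linarith [mul_le_mul_of_nonneg_left (sqrt_two_sub_half_le_add_sub_mul ha hb hab) hs]

lemma Ioo_div_sqrt_two_subset_Ioo_quarter {s : ℝ} (hs : 0 ≤ s) :
    Ioo (s / (2 * √2)) (s / √2) ⊆ Ioo (s / 4) ((√2 - 1 / 2) * s) := by
  have hsqrt : √2 ^ 2 = 2 := Real.sq_sqrt zero_le_two
  have hsqrt_ge : 1 ≤ √2 := Real.one_le_sqrt.2 one_le_two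
  refine Ioo_subset_Ioo (div_le_div_of_nonneg_left hs (by positivity) (by nlinarith)) ?_
  calc s / √2 = √2 / 2 * s := by field_simp; rw [hsqrt]
    _ ≤ (√2 - 1 / 2) * s := by gcongr; linarith

lemma half_side_le_three_slices {k : Fin 2 → ℕ} {z u : EuclideanSpace ℝ (Fin 2)} (hM : M ≠ 0)
    (hk : ∀ i, k i < M ^ n) (hu : ‖u‖ = 1) (hne : (adicCube 2 M n k ∩ lineSeg z u).Nonempty)
    (hcu : cu ∈ Ioo ((M : ℝ) ^ (-(n : ℤ)) / 4) ((√2 - 1 / 2) * (M : ℝ) ^ (-(n : ℤ))))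
    (hcl : -cl ∈ Ioo ((M : ℝ) ^ (-(n : ℤ)) / 4) ((√2 - 1 / 2) * (M : ℝ) ^ (-(n : ℤ)))) :
    ENNReal.ofReal ((M : ℝ) ^ (-(n : ℤ)) / 2) ≤
      μH[1] (interior (adicCube 2 M n k) ∩ lineSeg z u) +
      μH[1] (interior (adicCube 2 M n k) ∩ lineSeg (z + cu • vec2 (-(u 1)) (u 0)) u) +
      μH[1] (interior (adicCube 2 M n k) ∩ lineSeg (z + cl • vec2 (-(u 1)) (u 0)) u) := by
  simp only [interior_adicCube_inter_lineSeg hu hM hk, signedHeight_add_smul_normal hu]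
  obtain ⟨p, hpk, hpz⟩ := hne
  have hmeet := abs_signedHeight_sub_le (u := u) (mem_adicCube_iff_abs_sub_adicCenter_le.1 hpk)
  rw [((mem_lineSeg_iff_signedHeight_eq hu).1 hpz).1] at hmeet
  have hab : |u 0| ^ 2 + |u 1| ^ 2 = 1 := by
    simpa only [sq_abs] using sq_add_sq_eq_one_of_norm_eq_one hu
  have hoffset := Ioo_quarter_subset_Ioo_of_sq_add_sq_eq_one (abs_nonneg (u 0))
    (abs_nonneg (u 1)) hab (s := (M : ℝ) ^ (-(n : ℤ))) (by positivity)
  rw [← sub_add_cancel (|u 0| + |u 1|) (|u 0| * |u 1|), mul_add] at hmeet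
  rcases abs_lt_or_abs_add_lt_or_abs_add_lt hmeet (hoffset hcu) (hoffset hcl) with hδ | hδ | hδ
  · exact (le_hausdorffMeasure_interior_adicCube_inter hu hM hδ).trans
      (le_self_add.trans le_self_add)
  · rw [← add_sub_right_comm] at hδ
    exact (le_hausdorffMeasure_interior_adicCube_inter hu hM hδ).trans
      (le_add_self.trans le_self_add)
  · rw [← add_sub_right_comm] at hδ
    exact (le_hausdorffMeasure_interior_adicCube_inter hu hM hδ).trans le_add_self

lemma count_by_three_slices_of_norm_eq_one (hM : M ≠ 0)
    {𝒞 : Set (Fin 2 → ℕ)} (h𝒞 : ∀ k ∈ 𝒞, ∀ i, k i < M ^ n)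
    (z : EuclideanSpace ℝ (Fin 2)) {u : EuclideanSpace ℝ (Fin 2)} (hu : ‖u‖ = 1)
    (hcu : cu ∈ Ioo ((M : ℝ) ^ (-(n : ℤ)) / 4) ((√2 - 1 / 2) * (M : ℝ) ^ (-(n : ℤ))))
    (hcl : -cl ∈ Ioo ((M : ℝ) ^ (-(n : ℤ)) / 4) ((√2 - 1 / 2) * (M : ℝ) ^ (-(n : ℤ)))) :
    ({k ∈ 𝒞 | (adicCube 2 M n k ∩ lineSeg z u).Nonempty}.ncard : ℝ≥0∞) ≤
      2 * (M : ℝ≥0∞) ^ n *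
        (μH[1] ((⋃ k ∈ 𝒞, adicCube 2 M n k) ∩ lineSeg z u) +
         μH[1] ((⋃ k ∈ 𝒞, adicCube 2 M n k) ∩ lineSeg (z + cu • vec2 (-(u 1)) (u 0)) u) +
         μH[1] ((⋃ k ∈ 𝒞, adicCube 2 M n k) ∩ lineSeg (z + cl • vec2 (-(u 1)) (u 0)) u)) := by
  have hfin : {k ∈ 𝒞 | (adicCube 2 M n k ∩ lineSeg z u).Nonempty}.Finite :=
    (finite_of_forall_lt_pow h𝒞).subset (sep_subset _ _)
  rw [ncard_eq_toFinset_card _ hfin]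
  let μ : Measure (EuclideanSpace ℝ (Fin 2)) :=
    μH[1].restrict (lineSeg z u) + μH[1].restrict (lineSeg (z + cu • vec2 (-(u 1)) (u 0)) u) +
      μH[1].restrict (lineSeg (z + cl • vec2 (-(u 1)) (u 0)) u)
  have hμ : ∀ A, MeasurableSet A → μ A = μH[1] (A ∩ lineSeg z u) +
      μH[1] (A ∩ lineSeg (z + cu • vec2 (-(u 1)) (u 0)) u) +
      μH[1] (A ∩ lineSeg (z + cl • vec2 (-(u 1)) (u 0)) u) := fun A hA => by
    simp only [μ, Measure.add_apply, Measure.restrict_apply hA]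
  rw [← hμ _ (measurableSet_biUnion_adicCube 𝒞)]
  have hcard := card_mul_le_measure_biUnion_adicCube μ (S := hfin.toFinset)
    (fun k hk => (hfin.mem_toFinset.1 hk).1) fun k hk => by
      obtain ⟨hk𝒞, hne⟩ := hfin.mem_toFinset.1 hk
      rw [hμ _ isOpen_interior.measurableSet]
      exact half_side_le_three_slices hM (h𝒞 k hk𝒞) hu hne hcu hcl
  calc (hfin.toFinset.card : ℝ≥0∞)
      = 2 * (M : ℝ≥0∞) ^ n *
          (hfin.toFinset.card * ENNReal.ofReal ((M : ℝ) ^ (-(n : ℤ)) / 2)) := by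
        rw [mul_left_comm, two_mul_pow_mul_ofReal_half_side hM, mul_one]
    _ ≤ 2 * (M : ℝ≥0∞) ^ n * μ (⋃ k ∈ 𝒞, adicCube 2 M n k) := by gcongr

theorem count_by_three_slices_general (hM : M ≠ 0)
    {𝒞 : Set (Fin 2 → ℕ)} (h𝒞 : ∀ k ∈ 𝒞, ∀ i, k i < M ^ n)
    (z : EuclideanSpace ℝ (Fin 2)) {v : EuclideanSpace ℝ (Fin 2)} (hv : v ≠ 0)
    (hcu : cu ∈ Ioo ((M : ℝ) ^ (-(n : ℤ)) / 4) ((√2 - 1 / 2) * (M : ℝ) ^ (-(n : ℤ))))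
    (hcl : -cl ∈ Ioo ((M : ℝ) ^ (-(n : ℤ)) / 4) ((√2 - 1 / 2) * (M : ℝ) ^ (-(n : ℤ)))) :
    ({k ∈ 𝒞 | (adicCube 2 M n k ∩ lineSeg z v).Nonempty}.ncard : ℝ≥0∞) ≤
      2 * (M : ℝ≥0∞) ^ n *
        (μH[1] ((⋃ k ∈ 𝒞, adicCube 2 M n k) ∩ lineSeg z v) +
         μH[1] ((⋃ k ∈ 𝒞, adicCube 2 M n k) ∩
            lineSeg (z + (cu * ‖v‖⁻¹) • vec2 (-(v 1)) (v 0)) v) +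
         μH[1] ((⋃ k ∈ 𝒞, adicCube 2 M n k) ∩
            lineSeg (z + (cl * ‖v‖⁻¹) • vec2 (-(v 1)) (v 0)) v)) := by
  have hnorm : ‖v‖⁻¹ ≠ 0 := inv_ne_zero (norm_ne_zero_iff.2 hv)
  have hnormal : ∀ c : ℝ, (c * ‖v‖⁻¹) • vec2 (-(v 1)) (v 0) =
      c • vec2 (-((‖v‖⁻¹ • v) 1)) ((‖v‖⁻¹ • v) 0) := fun c => by
    ext i
    fin_cases i <;> simp [vec2, mul_assoc]
  simp only [hnormal, ← lineSeg_smul hnorm _ v]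
  exact count_by_three_slices_of_norm_eq_one hM h𝒞 z (norm_smul_inv_norm hv) hcu hcl

end ThreeSlices

/-- a deterministic counting estimate.  If `ℓᵘ, ℓˡ` are segments cut
out by lines parallel to `ℓ`, on opposite sides of it, at distance in
`(M⁻ⁿ/(2√2), M⁻ⁿ/√2)` from it, then the number of level-`n` squares of the
collection `𝒞` whose interior meets `ℓ` is at most
`2 Mⁿ (|F ∩ ℓ| + |F ∩ ℓᵘ| + |F ∩ ℓˡ|)` where `F` is the union of `𝒞`. -/
theorem count_by_three_slices
    (M n : ℕ) (hM : 2 ≤ M) (hn : 1 ≤ n)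
    (𝒞 : Set (Fin 2 → ℕ)) (h𝒞 : ∀ k ∈ 𝒞, ∀ i, k i < M ^ n)
    (z v : EuclideanSpace ℝ (Fin 2)) (hv0 : v 0 ≠ 0) (hv1 : v 1 ≠ 0)
    (cu cl : ℝ)
    (hcu : cu ∈ Set.Ioo ((M : ℝ) ^ (-(n : ℤ)) / (2 * Real.sqrt 2))
        ((M : ℝ) ^ (-(n : ℤ)) / Real.sqrt 2))
    (hcl : cl ∈ Set.Ioo (-((M : ℝ) ^ (-(n : ℤ)) / Real.sqrt 2))
        (-((M : ℝ) ^ (-(n : ℤ)) / (2 * Real.sqrt 2)))) :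
    (({k ∈ 𝒞 | (interior (adicCube 2 M n k) ∩ lineSeg z v).Nonempty}.ncard : ℝ≥0∞)) ≤
      2 * (M : ℝ≥0∞) ^ n *
        (μH[1] ((⋃ k ∈ 𝒞, adicCube 2 M n k) ∩ lineSeg z v) +
         μH[1] ((⋃ k ∈ 𝒞, adicCube 2 M n k) ∩
            lineSeg (z + (cu * ‖v‖⁻¹) • vec2 (-(v 1)) (v 0)) v) +
         μH[1] ((⋃ k ∈ 𝒞, adicCube 2 M n k) ∩
            lineSeg (z + (cl * ‖v‖⁻¹) • vec2 (-(v 1)) (v 0)) v)) := by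
  have hv : v ≠ 0 := fun h => hv0 (by rw [h, PiLp.zero_apply])
  have hoffset := Ioo_div_sqrt_two_subset_Ioo_quarter (s := (M : ℝ) ^ (-(n : ℤ))) (by positivity)
  have hinterior := ncard_interior_adicCube_inter_le (M := M) (n := n)
    (finite_of_forall_lt_pow h𝒞) (lineSeg z v)
  exact (Nat.cast_le.2 hinterior).trans <| count_by_three_slices_general (by lia) h𝒞 z hv
    (hoffset hcu) (hoffset (neg_mem_Ioo_iff.2 hcl))
end
end

section
/- For every θ ∈ (0, π/4) there exists a constant s_θ > 0 with the following property. Let n ≥ 1, let Δ_n be an M^{-2n}-dense subset of the diagonal Δ (the segment from (0,1) to (1,0)), and let A_n^θ be an M^{-2n}-dense subset of the interval (θ, π/2 − θ). Then for every union F of level-(n−1) M-adic squares in [0,1]² and every segment ℓ ∈ 𝔏^θ there exists a segment ℓ' whose intersection point with Δ lies in Δ_n and whose angle with the x-axis lies in A_n^θ, such that 𝓛eb₁(F ∩ ℓ) ≤ 𝓛eb₁(F ∩ ℓ') + s_θ M^{-(n−1)}. -/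
open MeasureTheory Set ENNReal ProbabilityTheory Real

noncomputable section

/-- The diagonal `Δ` of the unit square, from `(0,1)` to `(1,0)`. -/
def diagSeg : Set (EuclideanSpace ℝ (Fin 2)) :=
  {x | x 0 + x 1 = 1 ∧ 0 ≤ x 0 ∧ x 0 ≤ 1}

/-- The unit direction vector of angle `α` with the `x`-axis. -/
def dirVec (α : ℝ) : EuclideanSpace ℝ (Fin 2) :=
  (WithLp.equiv 2 (Fin 2 → ℝ)).symm ![Real.cos α, Real.sin α]

/-!
Parametrise `ℓ` and `ℓ'` by arc length from their points `z`, `z'` on the diagonal. If `z`, `z'` and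
the two angles are `η`-close, then as long as the point of `ℓ` is in the unit square the points of
`ℓ` and `ℓ'` with the same parameter are `3η`-close. So a parameter that counts for `F ∩ ℓ` and not
for `F ∩ ℓ'` puts the point of `ℓ` within `3η` of one of the `2(M^(n-1) + 1)` lines of the
level-`(n-1)` grid. Because `ℓ` makes an angle larger than `θ` with both axes, each such line
accounts for parameters of total length at most `6η / sin θ`, and for `η = M^(-2n)` the sum is
`O(M^(-(n-1)) / sin θ)`.
-/

/-- The closed unit cube `[0,1]^d`. Its condition is written exactly as in `lineSeg`, so that a
segment is, by definition, a line intersected with `unitCube 2`. -/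
def unitCube (d : ℕ) : Set (EuclideanSpace ℝ (Fin d)) :=
  {x | ∀ i, 0 ≤ x i ∧ x i ≤ 1}

/-- The `δ`-neighbourhood of the level-`n` `M`-adic grid of `[0,1]^d`: the points having a
coordinate within `δ` of one of the `M^n + 1` grid values `j * M⁻ⁿ`. It is where a point of a cube
can be pushed out of that cube by a perturbation of size `δ`. -/
def gridNhd (d M n : ℕ) (δ : ℝ) : Set (EuclideanSpace ℝ (Fin d)) :=
  ⋃ i : Fin d, ⋃ j ∈ Finset.range (M ^ n + 1), {x | |x i - j * (M : ℝ) ^ (-(n : ℤ))| ≤ δ}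

section AdicCubes

variable {d M n : ℕ} {k : Fin d → ℕ} {𝒞 : Set (Fin d → ℕ)} {δ : ℝ}

lemma adicCube_subset_unitCube (hk : ∀ i, k i < M ^ n) : adicCube d M n k ⊆ unitCube d := by
  intro x hx i
  refine ⟨le_trans (by positivity) (hx i).1, (hx i).2.trans ?_⟩
  calc ((k i : ℝ) + 1) * (M : ℝ) ^ (-(n : ℤ))
      ≤ (M : ℝ) ^ n * (M : ℝ) ^ (-(n : ℤ)) := by
        gcongr
        exact_mod_cast hk i
    _ = (M : ℝ) ^ n * ((M : ℝ) ^ n)⁻¹ := by rw [zpow_neg, zpow_natCast]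
    _ ≤ 1 := mul_inv_le_one

lemma iUnion_adicCube_subset_unitCube (h𝒞 : ∀ k ∈ 𝒞, ∀ i, k i < M ^ n) :
    (⋃ k ∈ 𝒞, adicCube d M n k) ⊆ unitCube d :=
  iUnion₂_subset fun k hk => adicCube_subset_unitCube (h𝒞 k hk)

lemma mem_Icc_of_abs_sub_le {a b x y : ℝ} (hx : x ∈ Icc a b) (hxy : |x - y| ≤ δ)
    (ha : δ < |x - a|) (hb : δ < |x - b|) : y ∈ Icc a b := by
  rw [abs_of_nonneg (sub_nonneg.2 hx.1)] at ha
  rw [abs_of_nonpos (sub_nonpos.2 hx.2)] at hb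
  have := abs_le.1 hxy
  constructor <;> linarith

lemma mem_adicCube_of_dist_le {x y : EuclideanSpace ℝ (Fin d)} (hk : ∀ i, k i < M ^ n)
    (hx : x ∈ adicCube d M n k) (hxy : dist x y ≤ δ) (hgrid : x ∉ gridNhd d M n δ) :
    y ∈ adicCube d M n k := by
  have far_from_grid (i : Fin d) (j : ℕ) (hj : j ≤ M ^ n) :
      δ < |x i - j * (M : ℝ) ^ (-(n : ℤ))| := by
    by_contra! h
    exact hgrid (mem_iUnion.2 ⟨i, mem_iUnion₂.2 ⟨j, Finset.mem_range_succ_iff.2 hj, h⟩⟩)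
  intro i
  have coord_close : |x i - y i| ≤ δ := (PiLp.dist_apply_le x y i).trans hxy
  exact mem_Icc_of_abs_sub_le (hx i) coord_close (far_from_grid i (k i) (hk i).le)
    (by exact_mod_cast far_from_grid i (k i + 1) (hk i))

lemma preimage_iUnion_adicCube_subset {T : Type*} {γ γ' : T → EuclideanSpace ℝ (Fin d)}
    (h𝒞 : ∀ k ∈ 𝒞, ∀ i, k i < M ^ n)
    (hγ : ∀ t, γ t ∈ unitCube d → dist (γ t) (γ' t) ≤ δ) :
    γ ⁻¹' (⋃ k ∈ 𝒞, adicCube d M n k) ⊆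
      γ' ⁻¹' (⋃ k ∈ 𝒞, adicCube d M n k) ∪ γ ⁻¹' gridNhd d M n δ := by
  intro t ht
  obtain ⟨k, hk, htk⟩ := mem_iUnion₂.1 ht
  refine or_iff_not_imp_right.2 fun hgrid => mem_iUnion₂.2 ⟨k, hk, ?_⟩
  exact mem_adicCube_of_dist_le (h𝒞 k hk) htk
    (hγ t (adicCube_subset_unitCube (h𝒞 k hk) htk)) hgrid

end AdicCubes

section Lines

lemma volume_setOf_abs_add_mul_le_eq {a : ℝ} (ha : a ≠ 0) (c δ : ℝ) :
    volume {t : ℝ | |c + t * a| ≤ δ} = ENNReal.ofReal (2 * δ / |a|) := by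
  have ball : {t : ℝ | |c + t * a| ≤ δ} = Metric.closedBall (-(c / a)) (δ / |a|) := by
    ext t
    rw [Metric.mem_closedBall, Real.dist_eq, le_div_iff₀ (abs_pos.2 ha), ← abs_mul,
      mem_ofPred_eq]
    congr! 2
    field_simp
    ring
  rw [ball, Real.volume_closedBall, mul_div_assoc]

variable {d : ℕ} {z z' v v' : EuclideanSpace ℝ (Fin d)}

lemma volume_line_preimage_gridNhd_le (M n : ℕ) {σ δ : ℝ} (hσ : 0 < σ) (hδ : 0 ≤ δ)
    (hv : ∀ i, σ ≤ |v i|) :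
    volume ((fun t : ℝ => z + t • v) ⁻¹' gridNhd d M n δ) ≤
      ENNReal.ofReal (d * (((M : ℝ) ^ n + 1) * (2 * δ / σ))) := by
  have strip (i : Fin d) (c : ℝ) :
      volume {t : ℝ | |(z + t • v) i - c| ≤ δ} ≤ ENNReal.ofReal (2 * δ / σ) := by
    have shift : {t : ℝ | |(z + t • v) i - c| ≤ δ} = {t : ℝ | |(z i - c) + t * v i| ≤ δ} := by
      simp only [PiLp.add_apply, PiLp.smul_apply, smul_eq_mul, add_sub_right_comm]
    rw [shift, volume_setOf_abs_add_mul_le_eq (abs_pos.1 (hσ.trans_le (hv i)))]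
    gcongr
    exact hv i
  simp only [gridNhd, preimage_iUnion]
  calc volume (⋃ i : Fin d, ⋃ j ∈ Finset.range (M ^ n + 1),
        {t : ℝ | |(z + t • v) i - j * (M : ℝ) ^ (-(n : ℤ))| ≤ δ})
      ≤ ∑ _i : Fin d, ∑ _j ∈ Finset.range (M ^ n + 1), ENNReal.ofReal (2 * δ / σ) :=
        (measure_iUnion_fintype_le _ _).trans <| Finset.sum_le_sum fun i _ =>
          (measure_biUnion_finset_le _ _).trans <| Finset.sum_le_sum fun j _ => strip i _
    _ = ENNReal.ofReal (d * (((M : ℝ) ^ n + 1) * (2 * δ / σ))) := by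
        rw [ENNReal.ofReal_mul (by positivity), ENNReal.ofReal_mul (by positivity),
          ← Nat.cast_pow, ← Nat.cast_succ, ENNReal.ofReal_natCast, ENNReal.ofReal_natCast]
        simp only [Finset.sum_const, Finset.card_univ, Fintype.card_fin, Finset.card_range,
          nsmul_eq_mul, Nat.succ_eq_add_one]

lemma dist_le_sqrt_of_mem_unitCube {x y : EuclideanSpace ℝ (Fin d)} (hx : x ∈ unitCube d)
    (hy : y ∈ unitCube d) : dist x y ≤ √d := by
  rw [EuclideanSpace.dist_eq]
  gcongr
  have coord_le (i : Fin d) : dist (x i) (y i) ^ 2 ≤ 1 :=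
    pow_le_one₀ dist_nonneg (Real.dist_le_of_mem_Icc_01 (hx i) (hy i))
  simpa using Finset.sum_le_card_nsmul Finset.univ _ 1 fun i _ => coord_le i

lemma dist_line_le {t : ℝ} (hv : ‖v‖ = 1) (hz : z ∈ unitCube d) (ht : z + t • v ∈ unitCube d) :
    dist (z + t • v) (z' + t • v') ≤ dist z z' + √d * dist v v' := by
  have abs_t_le : |t| ≤ √d := by
    simpa [dist_eq_norm, norm_smul, hv] using dist_le_sqrt_of_mem_unitCube ht hz
  calc dist (z + t • v) (z' + t • v')
      ≤ dist z z' + dist (t • v) (t • v') := dist_add_add_le _ _ _ _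
    _ = dist z z' + |t| * dist v v' := by rw [dist_smul₀, Real.norm_eq_abs]
    _ ≤ dist z z' + √d * dist v v' := by gcongr

lemma volume_line_preimage_le_add {M n : ℕ} {𝒞 : Set (Fin d → ℕ)}
    (h𝒞 : ∀ k ∈ 𝒞, ∀ i, k i < M ^ n) {σ η : ℝ} (hσ : 0 < σ) (hz : z ∈ unitCube d)
    (hv : ‖v‖ = 1) (hσv : ∀ i, σ ≤ |v i|) (hzz' : dist z z' ≤ η) (hvv' : dist v v' ≤ η) :
    volume ((fun t : ℝ => z + t • v) ⁻¹' ⋃ k ∈ 𝒞, adicCube d M n k) ≤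
      volume ((fun t : ℝ => z' + t • v') ⁻¹' ⋃ k ∈ 𝒞, adicCube d M n k) +
        ENNReal.ofReal (d * (((M : ℝ) ^ n + 1) * (2 * ((1 + √d) * η) / σ))) := by
  have hη : 0 ≤ η := dist_nonneg.trans hzz'
  have lines_close (t : ℝ) (ht : z + t • v ∈ unitCube d) :
      dist (z + t • v) (z' + t • v') ≤ (1 + √d) * η := by
    calc dist (z + t • v) (z' + t • v') ≤ dist z z' + √d * dist v v' := dist_line_le hv hz ht
      _ ≤ η + √d * η := by gcongr
      _ = (1 + √d) * η := by ring
  calc volume ((fun t : ℝ => z + t • v) ⁻¹' ⋃ k ∈ 𝒞, adicCube d M n k)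
      ≤ volume ((fun t : ℝ => z' + t • v') ⁻¹' ⋃ k ∈ 𝒞, adicCube d M n k) +
          volume ((fun t : ℝ => z + t • v) ⁻¹' gridNhd d M n ((1 + √d) * η)) :=
        (measure_mono (preimage_iUnion_adicCube_subset h𝒞 lines_close)).trans
          (measure_union_le _ _)
    _ ≤ _ := by
        gcongr
        exact volume_line_preimage_gridNhd_le M n hσ (by positivity) hσv

end Lines

section PlaneSegments

variable {z z' v v' : EuclideanSpace ℝ (Fin 2)}

lemma hausdorffMeasure_inter_lineSeg {F : Set (EuclideanSpace ℝ (Fin 2))}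
    (hF : F ⊆ unitCube 2) (hv : ‖v‖ = 1) :
    μH[1] (F ∩ lineSeg z v) = volume ((fun t : ℝ => z + t • v) ⁻¹' F) := by
  have line_isometry : Isometry fun t : ℝ => z + t • v :=
    (isometry_add_left z).comp (LinearIsometry.toSpanSingleton ℝ _ hv).isometry
  have slice : F ∩ lineSeg z v = F ∩ range fun t : ℝ => z + t • v := by
    ext x
    exact and_congr_right fun hx =>
      ⟨fun ⟨⟨t, ht⟩, _⟩ => ⟨t, ht.symm⟩, fun ⟨t, ht⟩ => ⟨⟨t, ht.symm⟩, hF hx⟩⟩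
  rw [slice, ← line_isometry.hausdorffMeasure_preimage (Or.inl zero_le_one),
    hausdorffMeasure_real]

lemma hausdorffMeasure_inter_lineSeg_le_add {M n : ℕ} {𝒞 : Set (Fin 2 → ℕ)}
    (h𝒞 : ∀ k ∈ 𝒞, ∀ i, k i < M ^ n) {σ η : ℝ} (hσ : 0 < σ) (hz : z ∈ unitCube 2)
    (hv : ‖v‖ = 1) (hv' : ‖v'‖ = 1) (hσv : ∀ i, σ ≤ |v i|) (hzz' : dist z z' ≤ η)
    (hvv' : dist v v' ≤ η) :
    μH[1] ((⋃ k ∈ 𝒞, adicCube 2 M n k) ∩ lineSeg z v) ≤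
      μH[1] ((⋃ k ∈ 𝒞, adicCube 2 M n k) ∩ lineSeg z' v') +
        ENNReal.ofReal (12 / σ * (((M : ℝ) ^ n + 1) * η)) := by
  have hη : 0 ≤ η := dist_nonneg.trans hzz'
  have hF := iUnion_adicCube_subset_unitCube h𝒞
  have sqrt_two_le : √((2 : ℕ) : ℝ) ≤ 2 := Real.sqrt_le_iff.2 (by norm_num)
  rw [hausdorffMeasure_inter_lineSeg hF hv, hausdorffMeasure_inter_lineSeg hF hv']
  refine (volume_line_preimage_le_add h𝒞 hσ hz hv hσv hzz' hvv').trans ?_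
  gcongr _ + ENNReal.ofReal ?_
  calc ((2 : ℕ) : ℝ) * (((M : ℝ) ^ n + 1) * (2 * ((1 + √((2 : ℕ) : ℝ)) * η) / σ))
      ≤ ((2 : ℕ) : ℝ) * (((M : ℝ) ^ n + 1) * (2 * ((1 + 2) * η) / σ)) := by gcongr
    _ = 12 / σ * (((M : ℝ) ^ n + 1) * η) := by push_cast; ring

lemma diagSeg_subset_unitCube : diagSeg ⊆ unitCube 2 := by
  rintro x ⟨hsum, h0, h1⟩
  exact Fin.forall_fin_two.2 ⟨⟨h0, h1⟩, by linarith, by linarith⟩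

end PlaneSegments

section Directions

lemma norm_dirVec (α : ℝ) : ‖dirVec α‖ = 1 := by
  simp [EuclideanSpace.norm_eq, dirVec]

lemma dist_dirVec_le (α β : ℝ) : dist (dirVec α) (dirVec β) ≤ |α - β| := by
  rw [EuclideanSpace.dist_eq, Fin.sum_univ_two, Real.dist_eq, Real.dist_eq, sq_abs, sq_abs]
  refine Real.sqrt_le_iff.2 ⟨abs_nonneg _, ?_⟩
  calc (cos α - cos β) ^ 2 + (sin α - sin β) ^ 2
      = 2 - 2 * cos (α - β) := by
        rw [Real.cos_sub]
        linear_combination Real.sin_sq_add_cos_sq α + Real.sin_sq_add_cos_sq β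
    _ ≤ (α - β) ^ 2 := by linarith [Real.one_sub_sq_div_two_le_cos (x := α - β)]
    _ = |α - β| ^ 2 := (sq_abs _).symm

lemma sin_le_dirVec {θ α : ℝ} (hθ : 0 ≤ θ) (hα : α ∈ Icc θ (π / 2 - θ)) (i : Fin 2) :
    sin θ ≤ dirVec α i := by
  have sin_le {β : ℝ} (hβ : θ ≤ β) (hβ' : β ≤ π / 2) : sin θ ≤ sin β :=
    Real.sin_le_sin_of_le_of_le_pi_div_two (by linarith [Real.pi_pos]) hβ' hβ
  revert i
  refine Fin.forall_fin_two.2 ⟨?_, ?_⟩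
  · rw [show dirVec α 0 = cos α from rfl, ← Real.sin_pi_div_two_sub]
    exact sin_le (by linarith [hα.2]) (by linarith [hα.1])
  · exact sin_le hα.1 (by linarith [hα.2])

end Directions

lemma pow_pred_add_one_mul_zpow_le {x : ℝ} (hx : 1 ≤ x) (n : ℕ) :
    (x ^ (n - 1) + 1) * x ^ (-(2 * n : ℤ)) ≤ 2 * x ^ (1 - (n : ℤ)) := by
  calc (x ^ (n - 1) + 1) * x ^ (-(2 * n : ℤ))
      ≤ (2 * x ^ (n - 1)) * x ^ (-(2 * n : ℤ)) := by
        gcongr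
        linarith [one_le_pow₀ hx (n := n - 1)]
    _ = 2 * x ^ (((n - 1 : ℕ) : ℤ) + -(2 * n : ℤ)) := by
        rw [zpow_add₀ (by positivity), zpow_natCast, mul_assoc]
    _ ≤ 2 * x ^ (1 - (n : ℤ)) := by
        gcongr
        omega

/-- for every `θ ∈ (0, π/4)` there is `s_θ > 0` such that for every
`n ≥ 1`, every `M^{-2n}`-dense subset `Δₙ` of the diagonal `Δ`, every
`M^{-2n}`-dense subset `Aₙ` of `(θ, π/2-θ)`, every union `F` of level-`(n-1)`
squares and every `ℓ ∈ 𝔏^θ` there is `ℓ'` with intersection point in `Δₙ` and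
angle in `Aₙ` such that `|F ∩ ℓ| ≤ |F ∩ ℓ'| + s_θ M^{-(n-1)}`. -/
theorem discretized_slice_approximation (M : ℕ) (hM : 2 ≤ M) :
    ∀ θ ∈ Set.Ioo 0 (π / 4), ∃ s : ℝ, 0 < s ∧
      ∀ n : ℕ, 1 ≤ n →
      ∀ Δn : Set (EuclideanSpace ℝ (Fin 2)), Δn ⊆ diagSeg →
        (∀ x ∈ diagSeg, ∃ y ∈ Δn, dist x y ≤ (M : ℝ) ^ (-(2 * n : ℤ))) →
      ∀ An : Set ℝ, An ⊆ Set.Ioo θ (π / 2 - θ) →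
        (∀ α ∈ Set.Ioo θ (π / 2 - θ), ∃ β ∈ An, |α - β| ≤ (M : ℝ) ^ (-(2 * n : ℤ))) →
      ∀ 𝒞 : Set (Fin 2 → ℕ), (∀ k ∈ 𝒞, ∀ i, k i < M ^ (n - 1)) →
      ∀ z ∈ diagSeg, 0 < z 0 → z 0 < 1 → ∀ α ∈ Set.Ioo θ (π / 2 - θ),
        ∃ z' ∈ Δn, ∃ α' ∈ An,
          μH[1] ((⋃ k ∈ 𝒞, adicCube 2 M (n - 1) k) ∩ lineSeg z (dirVec α)) ≤
            μH[1] ((⋃ k ∈ 𝒞, adicCube 2 M (n - 1) k) ∩ lineSeg z' (dirVec α')) +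
              ENNReal.ofReal (s * (M : ℝ) ^ (1 - (n : ℤ))) := by
  intro θ ⟨hθ0, hθ⟩
  have sin_pos : 0 < sin θ := Real.sin_pos_of_pos_of_lt_pi hθ0 (by linarith [Real.pi_pos])
  refine ⟨24 / sin θ, by positivity, ?_⟩
  intro n _ Δn _ Δn_dense An _ An_dense 𝒞 h𝒞 z hz _ _ α hα
  obtain ⟨z', hz', hzz'⟩ := Δn_dense z hz
  obtain ⟨α', hα', hαα'⟩ := An_dense α hα
  refine ⟨z', hz', α', hα', ?_⟩
  have transversal (i : Fin 2) : sin θ ≤ |dirVec α i| :=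
    (sin_le_dirVec hθ0.le (Ioo_subset_Icc_self hα) i).trans (le_abs_self _)
  refine (hausdorffMeasure_inter_lineSeg_le_add h𝒞 sin_pos (diagSeg_subset_unitCube hz)
    (norm_dirVec α) (norm_dirVec α') transversal hzz'
    ((dist_dirVec_le α α').trans hαα')).trans ?_
  gcongr _ + ENNReal.ofReal ?_
  calc 12 / sin θ * (((M : ℝ) ^ (n - 1) + 1) * (M : ℝ) ^ (-(2 * n : ℤ)))
      ≤ 12 / sin θ * (2 * (M : ℝ) ^ (1 - (n : ℤ))) := by
        gcongr 12 / sin θ * ?_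
        exact pow_pred_add_one_mul_zpow_le (Nat.one_le_cast.2 (one_le_two.trans hM)) n
    _ = 24 / sin θ * (M : ℝ) ^ (1 - (n : ℤ)) := by ring
end
end
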